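/- arXiv:2005.00793 — 5 statements merged into one kernel-verified Lean document; each statement's English description precedes it below -/
import Mathlib

section
/- There is a constant C > 0 such that for every x ∈ ℝ^N and every r > 0, C^{−1} · r^N · ∏_{α∈R}(|⟨x,α⟩| + r)^{k(α)} ≤ w(B(x,r)) ≤ C · r^N · ∏_{α∈R}(|⟨x,α⟩| + r)^{k(α)}. -/
open MeasureTheory Metric
open scoped ENNReal RealInnerProductSpace BigOperators

noncomputable section

/-- The reflection `σ_α` in the hyperplane orthogonal to `α`. -/
def dunklReflect {N : ℕ} (α x : EuclideanSpace ℝ (Fin N)) : EuclideanSpace ℝ (Fin N) :=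
  x - (2 * ⟪x, α⟫ / ‖α‖ ^ 2) • α

/-- The Dunkl weight measure `dw` with density `∏_{α ∈ R} |⟨x,α⟩|^{k α}`. -/
def dunklMeasure (N : ℕ) (R : Finset (EuclideanSpace ℝ (Fin N)))
    (k : EuclideanSpace ℝ (Fin N) → ℝ) : Measure (EuclideanSpace ℝ (Fin N)) :=
  (volume : Measure (EuclideanSpace ℝ (Fin N))).withDensity fun x =>
    ENNReal.ofReal (∏ α ∈ R, |⟪x, α⟫| ^ (k α))

/-- The homogeneous dimension `𝐍 = N + Σ_{α ∈ R} k(α)`. -/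
def homDim (N : ℕ) (R : Finset (EuclideanSpace ℝ (Fin N)))
    (k : EuclideanSpace ℝ (Fin N) → ℝ) : ℝ :=
  N + ∑ α ∈ R, k α


theorem dunkl_aux_ball {N : ℕ} (R : Finset (EuclideanSpace ℝ (Fin N)))
    (hR : ∀ α ∈ R, ‖α‖ = Real.sqrt 2) :
    ∃ δ : ℝ, 0 < δ ∧ ∀ (x : EuclideanSpace ℝ (Fin N)) (r : ℝ), 0 < r →
      ∃ y, ball y (δ * r) ⊆ ball x r ∧ ∀ α ∈ R, ∀ z ∈ ball y (δ * r), δ * r ≤ |⟪z, α⟫| := by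
  classical
  induction R using Finset.induction_on with
  | empty => exact ⟨1, one_pos, fun x r _ => ⟨x, by simp, by simp⟩⟩
  | insert a s ha ih =>
    obtain ⟨δ, hδ, H⟩ := ih (fun α h => hR α (Finset.mem_insert_of_mem h))
    have han : ‖a‖ = Real.sqrt 2 := hR a (Finset.mem_insert_self _ _)
    have hs2 : Real.sqrt 2 ≤ 3 / 2 := by
      rw [Real.sqrt_le_left (by norm_num)]; norm_num
    have haa : ⟪a, a⟫ = 2 := by
      rw [real_inner_self_eq_norm_sq, han, Real.sq_sqrt (by norm_num)]
    refine ⟨δ / 8, by positivity, fun x r hr => ?_⟩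
    obtain ⟨y, hy, hy2⟩ := H x r hr
    have hdr : 0 < δ * r := by positivity
    obtain ⟨e, he, hey⟩ : ∃ e : ℝ, |e| = 1 ∧ |⟪y, a⟫ + e * (δ * r / 2)| ≥ δ * r / 2 := by
      rcases le_total 0 ⟪y, a⟫ with h | h
      · refine ⟨1, by simp, ?_⟩
        rw [abs_of_nonneg (by linarith)]; linarith
      · refine ⟨-1, by simp, ?_⟩
        rw [abs_of_nonpos (by linarith)]; linarith
    set y' := y + (e * (δ * r / 4)) • a with hy'
    have hin : ⟪y', a⟫ = ⟪y, a⟫ + e * (δ * r / 2) := by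
      rw [hy', inner_add_left, real_inner_smul_left, haa]; ring
    have hd : dist y' y ≤ 3 / 8 * (δ * r) := by
      rw [hy', dist_eq_norm, add_sub_cancel_left, norm_smul, Real.norm_eq_abs, abs_mul, he, han,
        abs_of_pos (by positivity)]
      nlinarith
    have hsub : ball y' (δ / 8 * r) ⊆ ball y (δ * r) := by
      apply ball_subset_ball'
      nlinarith
    refine ⟨y', hsub.trans hy, fun α hα z hz => ?_⟩
    rcases Finset.mem_insert.1 hα with rfl | h
    · have h1 : |⟪z - y', α⟫| ≤ ‖z - y'‖ * ‖α‖ := abs_real_inner_le_norm _ _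
      have h2 : ‖z - y'‖ < δ / 8 * r := by rw [← dist_eq_norm]; exact hz
      have h3 : ‖z - y'‖ * ‖α‖ ≤ δ / 8 * r * (3 / 2) := by
        rw [han]
        exact mul_le_mul h2.le hs2 (Real.sqrt_nonneg _) (by positivity)
      rw [inner_sub_left, hin] at h1
      have h4 := abs_sub_abs_le_abs_sub (⟪y, α⟫ + e * (δ * r / 2)) ⟪z, α⟫
      rw [abs_sub_comm] at h4
      linarith
    · have := hy2 α h z (hsub hz)
      linarith

theorem dunkl_aux_diff {N : ℕ} (α x z : EuclideanSpace ℝ (Fin N)) (r : ℝ)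
    (h : ‖α‖ = Real.sqrt 2) (hz : z ∈ ball x r) : |⟪z, α⟫ - ⟪x, α⟫| ≤ 2 * r := by
  have hs2 : Real.sqrt 2 ≤ 2 := by
    rw [Real.sqrt_le_left (by norm_num)]; norm_num
  have h1 : |⟪z - x, α⟫| ≤ ‖z - x‖ * ‖α‖ := abs_real_inner_le_norm _ _
  have h2 : ‖z - x‖ < r := by rw [← dist_eq_norm]; exact hz
  rw [inner_sub_left, h] at h1
  have := norm_nonneg (z - x)
  have := Real.sqrt_nonneg 2
  nlinarith

theorem dunkl_aux_prod {ι : Type*} (R : Finset ι) (k f g : ι → ℝ) (K : ℝ) (hK : 0 ≤ K)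
    (hk : ∀ α ∈ R, 0 ≤ k α) (hf : ∀ α ∈ R, 0 ≤ f α) (hg : ∀ α ∈ R, 0 ≤ g α)
    (h : ∀ α ∈ R, f α ≤ K * g α) :
    ∏ α ∈ R, f α ^ k α ≤ (∏ α ∈ R, K ^ k α) * ∏ α ∈ R, g α ^ k α := by
  rw [← Finset.prod_mul_distrib]
  refine Finset.prod_le_prod (fun α hα => Real.rpow_nonneg (hf α hα) _) fun α hα => ?_
  rw [← Real.mul_rpow hK (hg α hα)]
  exact Real.rpow_le_rpow (hf α hα) (h α hα) (hk α hα)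

theorem dunkl_aux_vol {N : ℕ} (y : EuclideanSpace ℝ (Fin N)) (s : ℝ) (hs : 0 < s) :
    volume (ball y s) =
      ENNReal.ofReal (s ^ N * (volume (ball (0 : EuclideanSpace ℝ (Fin N)) 1)).toReal) := by
  rw [Measure.addHaar_ball_of_pos _ _ hs, ENNReal.ofReal_mul (by positivity),
    ENNReal.ofReal_toReal measure_ball_lt_top.ne, finrank_euclideanSpace_fin]

theorem dunklMeasure_ball_asymp
    (N : ℕ) (hN : 1 ≤ N)
    (R : Finset (EuclideanSpace ℝ (Fin N)))
    (k : EuclideanSpace ℝ (Fin N) → ℝ)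
    (hR0 : (0 : EuclideanSpace ℝ (Fin N)) ∉ R)
    (hRnorm : ∀ α ∈ R, ‖α‖ = Real.sqrt 2)
    (hRrefl : ∀ α ∈ R, ∀ β ∈ R, dunklReflect α β ∈ R)
    (hk0 : ∀ α ∈ R, 0 ≤ k α)
    (hkinv : ∀ α ∈ R, ∀ β ∈ R, k (dunklReflect α β) = k β) :
    ∃ C : ℝ, 0 < C ∧ ∀ (x : EuclideanSpace ℝ (Fin N)) (r : ℝ), 0 < r →
      ENNReal.ofReal (C⁻¹ * r ^ N * ∏ α ∈ R, (|⟪x, α⟫| + r) ^ (k α)) ≤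
          dunklMeasure N R k (ball x r) ∧
        dunklMeasure N R k (ball x r) ≤
          ENNReal.ofReal (C * r ^ N * ∏ α ∈ R, (|⟪x, α⟫| + r) ^ (k α)) := by
  obtain ⟨δ, hδ, H⟩ := dunkl_aux_ball R hRnorm
  set V := (volume (ball (0 : EuclideanSpace ℝ (Fin N)) 1)).toReal with hV
  have hVpos : 0 < V :=
    ENNReal.toReal_pos (measure_ball_pos _ _ one_pos).ne' measure_ball_lt_top.ne
  set A := ∏ α ∈ R, (2 : ℝ) ^ k α with hA
  set B := ∏ α ∈ R, (1 + 3 / δ) ^ k α with hB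
  have hApos : 0 < A := Finset.prod_pos fun α _ => by positivity
  have hBpos : 0 < B := Finset.prod_pos fun α _ => by positivity
  refine ⟨A * V + B * (δ ^ N * V)⁻¹, by positivity, fun x r hr => ?_⟩
  set C := A * V + B * (δ ^ N * V)⁻¹ with hC
  set P := ∏ α ∈ R, (|⟪x, α⟫| + r) ^ (k α) with hP
  have hPpos : 0 < P := Finset.prod_pos fun α _ => by positivity
  have hCpos : 0 < C := by positivity
  constructor
  · obtain ⟨y, hy, hy2⟩ := H x r hr
    calc ENNReal.ofReal (C⁻¹ * r ^ N * P)
        ≤ ENNReal.ofReal (B⁻¹ * P) * volume (ball y (δ * r)) := by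
          rw [dunkl_aux_vol y _ (by positivity), ← ENNReal.ofReal_mul (by positivity)]
          apply ENNReal.ofReal_le_ofReal
          have h1 : C⁻¹ ≤ (B * (δ ^ N * V)⁻¹)⁻¹ := by
            apply inv_anti₀ (by positivity)
            rw [hC]
            have : 0 < A * V := by positivity
            linarith
          calc C⁻¹ * r ^ N * P ≤ (B * (δ ^ N * V)⁻¹)⁻¹ * r ^ N * P := by gcongr
            _ = B⁻¹ * P * ((δ * r) ^ N * V) := by
              rw [mul_inv, inv_inv, mul_pow]; ring
      _ = ∫⁻ _ in ball y (δ * r), ENNReal.ofReal (B⁻¹ * P) := by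
          rw [setLIntegral_const]
      _ ≤ ∫⁻ z in ball y (δ * r), ENNReal.ofReal (∏ α ∈ R, |⟪z, α⟫| ^ (k α)) := by
          refine setLIntegral_mono' measurableSet_ball fun z hz => ?_
          apply ENNReal.ofReal_le_ofReal
          rw [inv_mul_le_iff₀ hBpos]
          refine dunkl_aux_prod R k _ _ _ (by positivity) hk0 (fun α _ => by positivity)
            (fun α _ => by positivity) fun α hα => ?_
          have h1 := hy2 α hα z hz
          have h2 := dunkl_aux_diff α x z r (hRnorm α hα) (hy hz)
          have h3 := abs_sub_abs_le_abs_sub ⟪x, α⟫ ⟪z, α⟫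
          rw [abs_sub_comm] at h3
          have h4 : 3 * r ≤ 3 / δ * |⟪z, α⟫| := by
            calc 3 * r = 3 / δ * (δ * r) := by field_simp
              _ ≤ _ := by gcongr
          linarith
      _ = dunklMeasure N R k (ball y (δ * r)) := by
          rw [dunklMeasure, withDensity_apply _ measurableSet_ball]
      _ ≤ _ := measure_mono hy
  · calc dunklMeasure N R k (ball x r)
        = ∫⁻ z in ball x r, ENNReal.ofReal (∏ α ∈ R, |⟪z, α⟫| ^ (k α)) := by
          rw [dunklMeasure, withDensity_apply _ measurableSet_ball]
      _ ≤ ∫⁻ _ in ball x r, ENNReal.ofReal (A * P) := by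
          refine setLIntegral_mono' measurableSet_ball fun z hz => ?_
          apply ENNReal.ofReal_le_ofReal
          refine dunkl_aux_prod R k _ _ _ (by positivity) hk0 (fun α _ => by positivity)
            (fun α _ => by positivity) fun α hα => ?_
          have h2 := dunkl_aux_diff α x z r (hRnorm α hα) hz
          have h3 := abs_sub_abs_le_abs_sub ⟪z, α⟫ ⟪x, α⟫
          have := abs_nonneg ⟪x, α⟫
          linarith
      _ = ENNReal.ofReal (A * P) * volume (ball x r) := by
          rw [setLIntegral_const]
      _ ≤ _ := by
          rw [dunkl_aux_vol x _ hr, ← ENNReal.ofReal_mul (by positivity)]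
          apply ENNReal.ofReal_le_ofReal
          calc A * P * (r ^ N * V) = (A * V) * r ^ N * P := by ring
            _ ≤ C * r ^ N * P := by
              gcongr
              rw [hC]
              have : 0 < B * (δ ^ N * V)⁻¹ := by positivity
              linarith
end
end

section
/- The measure w is doubling: there is a constant C > 0 such that w(B(x, 2r)) ≤ C · w(B(x, r)) for all x ∈ ℝ^N and r > 0. -/
open MeasureTheory Metric
open scoped ENNReal RealInnerProductSpace BigOperators

noncomputable section

lemma dunkl_exists_generic {N : ℕ} (R : Finset (EuclideanSpace ℝ (Fin N)))
    (hR0 : (0 : EuclideanSpace ℝ (Fin N)) ∉ R) :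
    ∃ v : EuclideanSpace ℝ (Fin N), ‖v‖ ≤ 1 / 2 ∧ ∀ α ∈ R, ⟪v, α⟫ ≠ 0 := by
  have h1 : ∃ v : EuclideanSpace ℝ (Fin N), ∀ α ∈ R, ⟪v, α⟫ ≠ 0 := by
    by_contra! h
    obtain ⟨i, hi⟩ := Subspace.exists_eq_top_of_iUnion_eq_univ
      (k := ℝ) (p := fun α : R => (Submodule.span ℝ {(α : EuclideanSpace ℝ (Fin N))})ᗮ) (by
        rw [Set.eq_univ_iff_forall]
        intro v
        obtain ⟨α, hα, h0⟩ := h v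
        rw [Set.mem_iUnion]
        refine ⟨⟨α, hα⟩, ?_⟩
        rw [SetLike.mem_coe, Submodule.mem_orthogonal_singleton_iff_inner_left]
        exact h0)
    have h2 : (i : EuclideanSpace ℝ (Fin N)) ∈
        (Submodule.span ℝ {(i : EuclideanSpace ℝ (Fin N))})ᗮ := by
      have := Submodule.mem_top (R := ℝ) (x := (i : EuclideanSpace ℝ (Fin N)))
      rwa [← hi] at this
    rw [Submodule.mem_orthogonal_singleton_iff_inner_left, inner_self_eq_zero] at h2
    exact hR0 (h2 ▸ i.2)
  obtain ⟨v, hv⟩ := h1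
  have hp : 0 < 1 / (2 * (‖v‖ + 1)) := by positivity
  refine ⟨(1 / (2 * (‖v‖ + 1))) • v, ?_, ?_⟩
  · rw [norm_smul, Real.norm_of_nonneg hp.le, div_mul_eq_mul_div, div_le_iff₀ (by positivity)]
    linarith
  · intro α hα
    rw [real_inner_smul_left]
    exact mul_ne_zero hp.ne' (hv α hα)

lemma dunkl_exists_center {N : ℕ} (R : Finset (EuclideanSpace ℝ (Fin N)))
    (hR0 : (0 : EuclideanSpace ℝ (Fin N)) ∉ R) :
    ∃ c : ℝ, 0 < c ∧ ∀ (x : EuclideanSpace ℝ (Fin N)) (r : ℝ), 0 < r →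
      ∃ z, ‖z - x‖ ≤ r / 2 ∧ ∀ α ∈ R, c * r ≤ |⟪z, α⟫| := by
  obtain ⟨v, hv, hv0⟩ := dunkl_exists_generic R hR0
  obtain ⟨e, he, hev⟩ : ∃ e : ℝ, 0 < e ∧ ∀ α ∈ R, e ≤ |⟪v, α⟫| := by
    rcases R.eq_empty_or_nonempty with h | h
    · exact ⟨1, one_pos, by simp [h]⟩
    · obtain ⟨β, hβ, hm⟩ := R.exists_min_image (fun α => |⟪v, α⟫|) h
      exact ⟨|⟪v, β⟫|, abs_pos.2 (hv0 β hβ), hm⟩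
  have hM : (0 : ℝ) < (R.card : ℝ) + 1 := by positivity
  set M : ℝ := (R.card : ℝ) + 1 with hMdef
  refine ⟨e / (2 * M), by positivity, ?_⟩
  intro x r hr
  by_contra! hcon
  have key : ∀ j : ℕ, j ∈ Finset.range (R.card + 1) →
      ∃ α ∈ R, |⟪x + ((j / M) * r) • v, α⟫| < e / (2 * M) * r := by
    intro j hj
    apply hcon
    have hjM : (j : ℝ) / M ≤ 1 := by
      rw [div_le_one hM, hMdef]
      have := Finset.mem_range.1 hj
      exact_mod_cast this.le
    have hj0 : 0 ≤ (j : ℝ) / M := by positivity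
    rw [add_sub_cancel_left, norm_smul, Real.norm_of_nonneg (by positivity)]
    calc (j : ℝ) / M * r * ‖v‖ ≤ 1 * r * (1 / 2) := by gcongr
      _ = r / 2 := by ring
  choose! f hfR hf using key
  obtain ⟨i, hi, j, hj, hij, hfij⟩ := Finset.exists_ne_map_eq_of_card_lt_of_maps_to
    (s := Finset.range (R.card + 1)) (t := R) (f := f) (by simp) hfR
  have h1 := hf i hi
  have h2 := hf j hj
  rw [← hfij] at h2
  have h3 := hev _ (hfR i hi)
  rw [inner_add_left, real_inner_smul_left] at h1 h2
  have h4 : |((i : ℝ) - j) / M * r * ⟪v, f i⟫| < e / M * r := by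
    have : ((i : ℝ) - j) / M * r * ⟪v, f i⟫ = (⟪x, f i⟫ + (i / M) * r * ⟪v, f i⟫)
      - (⟪x, f i⟫ + (j / M) * r * ⟪v, f i⟫) := by ring
    rw [this]
    calc _ ≤ _ := abs_sub _ _
      _ < e / (2 * M) * r + e / (2 * M) * r := add_lt_add h1 h2
      _ = e / M * r := by field_simp; ring
  have h5 : (1 : ℝ) ≤ |(i : ℝ) - j| := by
    have : (1 : ℤ) ≤ |(i : ℤ) - j| := Int.one_le_abs (by omega)
    exact_mod_cast this
  rw [abs_mul, abs_mul, abs_div, abs_of_pos hM, abs_of_pos hr] at h4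
  have h6 : 1 / M * r * e ≤ |(i : ℝ) - j| / M * r * |⟪v, f i⟫| := by gcongr
  have h7 : 1 / M * r * e = e / M * r := by ring
  linarith

theorem dunklMeasure_doubling
    (N : ℕ) (hN : 1 ≤ N)
    (R : Finset (EuclideanSpace ℝ (Fin N)))
    (k : EuclideanSpace ℝ (Fin N) → ℝ)
    (hR0 : (0 : EuclideanSpace ℝ (Fin N)) ∉ R)
    (hRnorm : ∀ α ∈ R, ‖α‖ = Real.sqrt 2)
    (hRrefl : ∀ α ∈ R, ∀ β ∈ R, dunklReflect α β ∈ R)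
    (hk0 : ∀ α ∈ R, 0 ≤ k α)
    (hkinv : ∀ α ∈ R, ∀ β ∈ R, k (dunklReflect α β) = k β) :
    ∃ C : ℝ, 0 < C ∧ ∀ (x : EuclideanSpace ℝ (Fin N)) (r : ℝ), 0 < r →
      dunklMeasure N R k (ball x (2 * r)) ≤
        ENNReal.ofReal C * dunklMeasure N R k (ball x r) := by
  have hD0 : Nonempty (Fin N) := ⟨⟨0, hN⟩⟩
  obtain ⟨c, hc, hcz⟩ := dunkl_exists_center R hR0
  have hs : (0 : ℝ) < Real.sqrt 2 := by positivity
  set s := Real.sqrt 2 with hsdef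
  set δ : ℝ := min (1 / 2) (c / (2 * s)) with hδdef
  have hδ : 0 < δ := by positivity
  have hδ1 : δ ≤ 1 / 2 := min_le_left _ _
  have hδ2 : δ * s ≤ c / 2 := by
    have : δ ≤ c / (2 * s) := min_le_right _ _
    rw [le_div_iff₀ (by positivity)] at this
    linarith
  set D : ℝ := 2 * (1 + 3 * s / c) with hDdef
  have hD : 0 < D := by positivity
  set f : EuclideanSpace ℝ (Fin N) → ℝ := fun x => ∏ α ∈ R, |⟪x, α⟫| ^ (k α) with hf
  set K : ℝ := D ^ (∑ α ∈ R, k α) with hK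
  have hKpos : 0 < K := by positivity
  have hf0 : ∀ y, 0 ≤ f y := fun y => Finset.prod_nonneg fun α _ => by positivity
  have hcomp : ∀ y y', (∀ α ∈ R, |⟪y, α⟫| ≤ D * |⟪y', α⟫|) → f y ≤ K * f y' := by
    intro y y' h
    simp only [hf, hK]
    rw [Real.rpow_sum_of_pos hD, ← Finset.prod_mul_distrib]
    refine Finset.prod_le_prod (fun α _ => by positivity) fun α hα => ?_
    rw [← Real.mul_rpow hD.le (abs_nonneg _)]
    exact Real.rpow_le_rpow (abs_nonneg _) (h α hα) (hk0 α hα)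
  have hip : ∀ α ∈ R, ∀ y z : EuclideanSpace ℝ (Fin N), |⟪y, α⟫| ≤ |⟪z, α⟫| + ‖y - z‖ * s := by
    intro α hα y z
    have h1 : ⟪y, α⟫ = ⟪z, α⟫ + ⟪y - z, α⟫ := by rw [inner_sub_left]; ring
    have h2 := abs_real_inner_le_norm (y - z) α
    rw [hRnorm α hα] at h2
    rw [h1]
    exact (abs_add_le _ _).trans (by linarith)
  refine ⟨K * K * (2 / δ) ^ N, by positivity, ?_⟩
  intro x r hr
  obtain ⟨z, hzx, hz⟩ := hcz x r hr
  have hup : ∀ y ∈ ball x (2 * r), f y ≤ K * f z := by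
    intro y hy
    refine hcomp _ _ fun α hα => ?_
    have h1 := hip α hα y z
    have h2 : ‖y - z‖ ≤ 3 * r := by
      have h3 : ‖y - x‖ < 2 * r := mem_ball_iff_norm.1 hy
      have h4 : y - z = (y - x) - (z - x) := by abel
      rw [h4]
      exact (norm_sub_le _ _).trans (by linarith)
    have h5 : 3 * r * s ≤ 3 * s / c * |⟪z, α⟫| := by
      calc 3 * r * s = 3 * s / c * (c * r) := by field_simp
        _ ≤ _ := by gcongr; exact hz α hα
    have h6 : ‖y - z‖ * s ≤ 3 * r * s := by gcongr
    have h7 : 0 ≤ 3 * s / c * |⟪z, α⟫| := by positivity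
    have h8 := abs_nonneg ⟪z, α⟫
    rw [hDdef]
    linarith
  have hlow : ∀ y ∈ ball z (δ * r), f z ≤ K * f y := by
    intro y hy
    refine hcomp _ _ fun α hα => ?_
    have h1 := hip α hα z y
    have h2 : ‖z - y‖ ≤ δ * r := by
      rw [norm_sub_rev]; exact (mem_ball_iff_norm.1 hy).le
    have h3 : ‖z - y‖ * s ≤ δ * r * s := by gcongr
    have h4 : δ * s * r ≤ c / 2 * r := by gcongr
    have h5 := hz α hα
    have h7 : 0 ≤ 3 * s / c * |⟪y, α⟫| := by positivity
    rw [hDdef]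
    linarith
  have hsub : ball z (δ * r) ⊆ ball x r := by
    apply ball_subset_ball'
    rw [dist_eq_norm]
    nlinarith
  have hvol : (volume : Measure (EuclideanSpace ℝ (Fin N))) (ball x (2 * r)) =
      ENNReal.ofReal ((2 / δ) ^ N) * volume (ball z (δ * r)) := by
    have h1 : 2 * r = (2 / δ) * (δ * r) := by field_simp
    rw [h1, Measure.addHaar_ball_mul_of_pos _ _ (by positivity),
      Measure.addHaar_ball_center _ z, finrank_euclideanSpace_fin]
  have hw : ∀ t : Set (EuclideanSpace ℝ (Fin N)), MeasurableSet t →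
      dunklMeasure N R k t = ∫⁻ y in t, ENNReal.ofReal (f y) := fun t ht =>
    withDensity_apply _ ht
  calc dunklMeasure N R k (ball x (2 * r))
      = ∫⁻ y in ball x (2 * r), ENNReal.ofReal (f y) := hw _ measurableSet_ball
    _ ≤ ∫⁻ y in ball x (2 * r), ENNReal.ofReal (K * f z) :=
        setLIntegral_mono' measurableSet_ball fun y hy => ENNReal.ofReal_le_ofReal (hup y hy)
    _ = ENNReal.ofReal (K * (2 / δ) ^ N) * ∫⁻ y in ball z (δ * r), ENNReal.ofReal (f z) := by
        rw [setLIntegral_const, setLIntegral_const, hvol, ENNReal.ofReal_mul hKpos.le,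
          ENNReal.ofReal_mul hKpos.le]
        ring
    _ ≤ ENNReal.ofReal (K * (2 / δ) ^ N) *
          ∫⁻ y in ball z (δ * r), ENNReal.ofReal K * ENNReal.ofReal (f y) := by
        refine mul_le_mul_right ?_ _
        refine setLIntegral_mono' (measurableSet_ball (x := z) (ε := δ * r)) fun y hy => ?_
        rw [← ENNReal.ofReal_mul hKpos.le]
        exact ENNReal.ofReal_le_ofReal (hlow y hy)
    _ = ENNReal.ofReal (K * K * (2 / δ) ^ N) * dunklMeasure N R k (ball z (δ * r)) := by
        rw [lintegral_const_mul' _ _ ENNReal.ofReal_ne_top, ← hw (ball z (δ * r)) measurableSet_ball,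
          ← mul_assoc, ← ENNReal.ofReal_mul (by positivity)]
        congr 2
        ring
    _ ≤ _ := by gcongr
end
end

section
/- There is a constant C ≥ 1 such that for every x ∈ ℝ^N and all 0 < r₁ ≤ r₂, C^{−1} (r₂/r₁)^N ≤ w(B(x, r₂)) / w(B(x, r₁)) ≤ C (r₂/r₁)^𝐍. -/
open MeasureTheory Metric
open scoped ENNReal RealInnerProductSpace BigOperators

noncomputable section

/-- Inside every ball there is a comparable ball on which all `|⟨z,α⟩|` are at least `c r`. -/
theorem dunkl_good_ball {N : ℕ} (R : Finset (EuclideanSpace ℝ (Fin N))) :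
    (∀ α ∈ R, ‖α‖ = Real.sqrt 2) →
    ∃ c : ℝ, 0 < c ∧ ∀ (x : EuclideanSpace ℝ (Fin N)) (r : ℝ), 0 < r →
      ∃ y, ball y (c * r) ⊆ ball x r ∧ ∀ z ∈ ball y (c * r), ∀ α ∈ R, c * r ≤ |⟪z, α⟫| := by
  classical
  induction R using Finset.induction_on with
  | empty => exact fun _ => ⟨1, one_pos, fun x r _ => ⟨x, by simp, by simp⟩⟩
  | insert α R _ ih =>
    intro h
    obtain ⟨c, hc, H⟩ := ih (fun β hβ => h β (Finset.mem_insert_of_mem hβ))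
    have hα : ‖α‖ = Real.sqrt 2 := h α (Finset.mem_insert_self _ _)
    have hs : Real.sqrt 2 ≤ 3 / 2 := by
      rw [Real.sqrt_le_left (by norm_num)]; norm_num
    have hs2 : Real.sqrt 2 ^ 2 = 2 := Real.sq_sqrt (by norm_num)
    refine ⟨c / 8, by positivity, fun x r hr => ?_⟩
    obtain ⟨y, hy, hz⟩ := H x r hr
    have hcr : 0 < c * r := by positivity
    obtain ⟨s, hs1, hsy⟩ : ∃ s : ℝ, |s| = 1 ∧ 0 ≤ s * ⟪y, α⟫ := by
      rcases le_total 0 ⟪y, α⟫ with h0 | h0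
      · exact ⟨1, by simp, by simpa using h0⟩
      · exact ⟨-1, by simp, by simpa using h0⟩
    have hss : s * s = 1 := by rw [← abs_mul_abs_self, hs1, one_mul]
    have hsub : ball (y + (s * (c * r / 4)) • α) (c / 8 * r) ⊆ ball y (c * r) := by
      apply ball_subset_ball'
      rw [dist_eq_norm, add_sub_cancel_left, norm_smul, Real.norm_eq_abs, abs_mul, hs1, hα,
        abs_of_pos (by positivity)]
      nlinarith
    refine ⟨y + (s * (c * r / 4)) • α, hsub.trans hy, fun z hzz β hβ => ?_⟩
    rcases Finset.mem_insert.1 hβ with rfl | hβ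
    · have e : ⟪z, β⟫ = ⟪y, β⟫ + s * (c * r / 4) * 2
          + ⟪z - (y + (s * (c * r / 4)) • β), β⟫ := by
        rw [inner_sub_left, inner_add_left, real_inner_smul_left, real_inner_self_eq_norm_sq,
          hα, hs2]
        ring
      have hb := abs_real_inner_le_norm (z - (y + (s * (c * r / 4)) • β)) β
      rw [mem_ball, dist_eq_norm] at hzz
      rw [hα] at hb
      have hb2 : |⟪z - (y + (s * (c * r / 4)) • β), β⟫| ≤ c / 8 * r * (3 / 2) :=
        hb.trans (mul_le_mul hzz.le hs (Real.sqrt_nonneg _) (by positivity))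
      have hb3 : |s * ⟪z - (y + (s * (c * r / 4)) • β), β⟫| ≤ c / 8 * r * (3 / 2) := by
        rwa [abs_mul, hs1, one_mul]
      have h4 : |⟪z, β⟫| = |s * ⟪z, β⟫| := by rw [abs_mul, hs1, one_mul]
      rw [h4]
      refine le_trans ?_ (le_abs_self _)
      have h5 := neg_le_of_abs_le hb3
      have e2 : s * ⟪z, β⟫ = s * ⟪y, β⟫ + (s * s) * (c * r / 2)
          + s * ⟪z - (y + (s * (c * r / 4)) • β), β⟫ := by
        conv_lhs => rw [e]
        ring
      rw [e2, hss]
      nlinarith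
    · have := hz z (hsub hzz) β hβ
      nlinarith

/-- Model weight. -/
def dunklP {N : ℕ} (R : Finset (EuclideanSpace ℝ (Fin N)))
    (k : EuclideanSpace ℝ (Fin N) → ℝ) (x : EuclideanSpace ℝ (Fin N)) (r : ℝ) : ℝ :=
  ∏ α ∈ R, (|⟪x, α⟫| + r) ^ (k α)

theorem dunklP_pos {N : ℕ} (R : Finset (EuclideanSpace ℝ (Fin N)))
    (k : EuclideanSpace ℝ (Fin N) → ℝ) (x : EuclideanSpace ℝ (Fin N)) (r : ℝ) (hr : 0 < r) :
    0 < dunklP R k x r :=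
  Finset.prod_pos fun _ _ => Real.rpow_pos_of_pos (by positivity) _

theorem dunklP_scale {N : ℕ} (R : Finset (EuclideanSpace ℝ (Fin N)))
    (k : EuclideanSpace ℝ (Fin N) → ℝ) (x : EuclideanSpace ℝ (Fin N)) (r a : ℝ) (hr : 0 < r)
    (ha : 0 < a) :
    ∏ α ∈ R, (a * (|⟪x, α⟫| + r)) ^ (k α) = a ^ (∑ α ∈ R, k α) * dunklP R k x r := by
  rw [Real.rpow_sum_of_pos ha, dunklP, ← Finset.prod_mul_distrib]
  exact Finset.prod_congr rfl fun α _ => Real.mul_rpow ha.le (by positivity)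

theorem dunkl_ball_comparable (N : ℕ) (hN : 1 ≤ N)
    (R : Finset (EuclideanSpace ℝ (Fin N)))
    (k : EuclideanSpace ℝ (Fin N) → ℝ)
    (hRnorm : ∀ α ∈ R, ‖α‖ = Real.sqrt 2)
    (hk0 : ∀ α ∈ R, 0 ≤ k α) :
    ∃ c₁ c₂ : ℝ, 0 < c₁ ∧ 0 < c₂ ∧ ∀ (x : EuclideanSpace ℝ (Fin N)) (r : ℝ), 0 < r →
      ENNReal.ofReal (c₁ * r ^ N * dunklP R k x r) ≤ dunklMeasure N R k (ball x r) ∧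
      dunklMeasure N R k (ball x r) ≤ ENNReal.ofReal (c₂ * r ^ N * dunklP R k x r) := by
  obtain ⟨c, hc, H⟩ := dunkl_good_ball R hRnorm
  have hs : Real.sqrt 2 ≤ 2 := by
    rw [Real.sqrt_le_left (by norm_num)]; norm_num
  have : Nonempty (Fin N) := ⟨⟨0, hN⟩⟩
  set v : ℝ := (volume (ball (0 : EuclideanSpace ℝ (Fin N)) 1)).toReal with hv
  have hvt : volume (ball (0 : EuclideanSpace ℝ (Fin N)) 1) ≠ ⊤ := measure_ball_lt_top.ne
  have hvpos : 0 < v := ENNReal.toReal_pos (measure_ball_pos _ _ one_pos).ne' hvt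
  have hvol : ∀ (x : EuclideanSpace ℝ (Fin N)) (r : ℝ), 0 < r → volume (ball x r) = ENNReal.ofReal (r ^ N * v) := by
    intro x r hr
    rw [Measure.addHaar_ball_of_pos _ _ hr, ENNReal.ofReal_mul (by positivity), hv,
      ENNReal.ofReal_toReal hvt]
    simp
  set a : ℝ := c / (c + 3) with ha
  have hapos : 0 < a := by positivity
  refine ⟨c ^ N * v * a ^ (∑ α ∈ R, k α), v * 2 ^ (∑ α ∈ R, k α), by positivity, by positivity,
    fun x r hr => ⟨?_, ?_⟩⟩
  · obtain ⟨y, hy, hz⟩ := H x r hr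
    have hP := dunklP_pos R k x r hr
    calc _ = ENNReal.ofReal (a ^ (∑ α ∈ R, k α) * dunklP R k x r) * volume (ball y (c * r)) := by
            rw [hvol _ _ (by positivity), ← ENNReal.ofReal_mul (by positivity)]
            congr 1; ring
      _ = ∫⁻ z in ball y (c * r), ENNReal.ofReal (a ^ (∑ α ∈ R, k α) * dunklP R k x r) := by
            rw [setLIntegral_const]
      _ ≤ ∫⁻ z in ball y (c * r), ENNReal.ofReal (∏ α ∈ R, |⟪z, α⟫| ^ (k α)) := by
            refine setLIntegral_mono' measurableSet_ball fun z hzz => ?_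
            apply ENNReal.ofReal_le_ofReal
            rw [← dunklP_scale R k x r a hr hapos]
            refine Finset.prod_le_prod (fun α _ => by positivity) fun α hα => ?_
            refine Real.rpow_le_rpow (by positivity) ?_ (hk0 α hα)
            have h1 := hz z hzz α hα
            have h2 : ‖x - z‖ ≤ r := by
              have := hy hzz
              rw [mem_ball, dist_eq_norm, norm_sub_rev] at this
              exact this.le
            have h3 := abs_real_inner_le_norm (x - z) α
            have h4 : ‖x - z‖ * ‖α‖ ≤ r * 2 := by
              rw [hRnorm α hα]
              exact mul_le_mul h2 hs (Real.sqrt_nonneg _) hr.le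
            have h5 : |⟪x, α⟫| ≤ |⟪z, α⟫| + |⟪x - z, α⟫| := by
              refine le_trans (le_of_eq ?_) (abs_add_le _ _)
              rw [← inner_add_left]; simp
            rw [ha, div_mul_eq_mul_div, div_le_iff₀ (by positivity)]
            nlinarith
      _ ≤ ∫⁻ z in ball x r, ENNReal.ofReal (∏ α ∈ R, |⟪z, α⟫| ^ (k α)) :=
            lintegral_mono_set hy
      _ = _ := by rw [dunklMeasure, withDensity_apply _ measurableSet_ball]
  · have hP := dunklP_pos R k x r hr
    calc _ = ∫⁻ z in ball x r, ENNReal.ofReal (∏ α ∈ R, |⟪z, α⟫| ^ (k α)) := by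
            rw [dunklMeasure, withDensity_apply _ measurableSet_ball]
      _ ≤ ∫⁻ z in ball x r, ENNReal.ofReal (2 ^ (∑ α ∈ R, k α) * dunklP R k x r) := by
            refine setLIntegral_mono' measurableSet_ball fun z hzz => ?_
            apply ENNReal.ofReal_le_ofReal
            rw [← dunklP_scale R k x r 2 hr two_pos]
            refine Finset.prod_le_prod (fun α _ => by positivity) fun α hα => ?_
            refine Real.rpow_le_rpow (by positivity) ?_ (hk0 α hα)
            have h2 : ‖z - x‖ ≤ r := by
              rw [mem_ball, dist_eq_norm] at hzz
              exact hzz.le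
            have h3 := abs_real_inner_le_norm (z - x) α
            have h4 : ‖z - x‖ * ‖α‖ ≤ r * 2 := by
              rw [hRnorm α hα]
              exact mul_le_mul h2 hs (Real.sqrt_nonneg _) hr.le
            have h5 : |⟪z, α⟫| ≤ |⟪x, α⟫| + |⟪z - x, α⟫| := by
              refine le_trans (le_of_eq ?_) (abs_add_le _ _)
              rw [← inner_add_left]; simp
            have := abs_nonneg ⟪x, α⟫
            linarith
      _ = ENNReal.ofReal (2 ^ (∑ α ∈ R, k α) * dunklP R k x r) * volume (ball x r) := by
            rw [setLIntegral_const]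
      _ = _ := by
            rw [hvol _ _ hr, ← ENNReal.ofReal_mul (by positivity)]
            congr 1; ring

theorem dunklMeasure_ball_growth
    (N : ℕ) (hN : 1 ≤ N)
    (R : Finset (EuclideanSpace ℝ (Fin N)))
    (k : EuclideanSpace ℝ (Fin N) → ℝ)
    (hR0 : (0 : EuclideanSpace ℝ (Fin N)) ∉ R)
    (hRnorm : ∀ α ∈ R, ‖α‖ = Real.sqrt 2)
    (hRrefl : ∀ α ∈ R, ∀ β ∈ R, dunklReflect α β ∈ R)
    (hk0 : ∀ α ∈ R, 0 ≤ k α)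
    (hkinv : ∀ α ∈ R, ∀ β ∈ R, k (dunklReflect α β) = k β) :
    ∃ C : ℝ, 1 ≤ C ∧ ∀ (x : EuclideanSpace ℝ (Fin N)) (r₁ r₂ : ℝ), 0 < r₁ → r₁ ≤ r₂ →
      ENNReal.ofReal (C⁻¹ * (r₂ / r₁) ^ N) * dunklMeasure N R k (ball x r₁) ≤
          dunklMeasure N R k (ball x r₂) ∧
        dunklMeasure N R k (ball x r₂) ≤
          ENNReal.ofReal (C * (r₂ / r₁) ^ (homDim N R k)) * dunklMeasure N R k (ball x r₁) := by
  obtain ⟨c₁, c₂, h1, h2, H⟩ := dunkl_ball_comparable N hN R k hRnorm hk0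
  have hC0 : 0 < max 1 (c₂ / c₁) := lt_max_of_lt_left one_pos
  have hC : c₂ ≤ max 1 (c₂ / c₁) * c₁ := by
    rw [← div_le_iff₀ h1]; exact le_max_right _ _
  refine ⟨max 1 (c₂ / c₁), le_max_left _ _, fun x r₁ r₂ hr₁ hr => ?_⟩
  generalize max 1 (c₂ / c₁) = C at hC hC0 ⊢
  have hr₂ : 0 < r₂ := hr₁.trans_le hr
  have hP₁ := dunklP_pos R k x r₁ hr₁
  have hP₂ := dunklP_pos R k x r₂ hr₂
  have hPm : dunklP R k x r₁ ≤ dunklP R k x r₂ :=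
    Finset.prod_le_prod (fun α _ => by positivity) fun α hα =>
      Real.rpow_le_rpow (by positivity) (by linarith) (hk0 α hα)
  have hPs : dunklP R k x r₂ ≤ (r₂ / r₁) ^ (∑ α ∈ R, k α) * dunklP R k x r₁ := by
    rw [← dunklP_scale R k x r₁ _ hr₁ (by positivity)]
    refine Finset.prod_le_prod (fun α _ => by positivity) fun α hα =>
      Real.rpow_le_rpow (by positivity) ?_ (hk0 α hα)
    have h1 : 1 ≤ r₂ / r₁ := (one_le_div hr₁).2 hr
    have h2 : r₂ / r₁ * r₁ = r₂ := div_mul_cancel₀ _ hr₁.ne'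
    have := abs_nonneg ⟪x, α⟫
    nlinarith
  constructor
  · calc _ ≤ ENNReal.ofReal (C⁻¹ * (r₂ / r₁) ^ N)
          * ENNReal.ofReal (c₂ * r₁ ^ N * dunklP R k x r₁) := by
            gcongr; exact (H x r₁ hr₁).2
      _ = ENNReal.ofReal (C⁻¹ * c₂ * r₂ ^ N * dunklP R k x r₁) := by
            rw [← ENNReal.ofReal_mul (by positivity)]
            congr 1; rw [div_pow]; field_simp
      _ ≤ ENNReal.ofReal (c₁ * r₂ ^ N * dunklP R k x r₂) := by
            apply ENNReal.ofReal_le_ofReal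
            have : C⁻¹ * c₂ ≤ c₁ := (inv_mul_le_iff₀ hC0).2 hC
            gcongr
      _ ≤ _ := (H x r₂ hr₂).1
  · calc _ ≤ ENNReal.ofReal (c₂ * r₂ ^ N * dunklP R k x r₂) := (H x r₂ hr₂).2
      _ ≤ ENNReal.ofReal ((C * c₁) * r₂ ^ N *
            ((r₂ / r₁) ^ (∑ α ∈ R, k α) * dunklP R k x r₁)) := by
            apply ENNReal.ofReal_le_ofReal
            gcongr
      _ = ENNReal.ofReal (C * (r₂ / r₁) ^ (homDim N R k))
          * ENNReal.ofReal (c₁ * r₁ ^ N * dunklP R k x r₁) := by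
            rw [← ENNReal.ofReal_mul (by positivity), homDim, Real.rpow_add (by positivity),
              Real.rpow_natCast]
            congr 1
            have : r₂ ^ N = (r₂ / r₁) ^ N * r₁ ^ N := by
              rw [← mul_pow, div_mul_cancel₀ _ hr₁.ne']
            rw [this]; ring
      _ ≤ _ := by
            gcongr; exact (H x r₁ hr₁).1
end
end

section
/- Let M ≥ 0, let ℓ ≥ 1 be an integer, let α ∈ R, and let φ ∈ C^ℓ(ℝ^N) satisfy |∂^β φ(x)| ≤ (1 + ‖x‖)^{−𝐍−M} for all multi-indices β with |β| ≤ ℓ and all x ∈ ℝ^N. Define ψ(x) = (φ(x) − φ(σ_α(x))) / ⟨x,α⟩ on the open set {x : ⟨x,α⟩ ≠ 0}. Then there is a constant C > 0 such that for every multi-index β with |β| ≤ ℓ − 1 and every x with ⟨x,α⟩ ≠ 0, |∂^β ψ(x)| ≤ C (1 + ‖x‖)^{−𝐍−M}. -/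
open MeasureTheory Metric
open scoped ENNReal RealInnerProductSpace BigOperators

noncomputable section

/-- The partial derivative in the `j`-th coordinate direction. -/
def pderivE {N : ℕ} (j : Fin N) (f : EuclideanSpace ℝ (Fin N) → ℂ) :
    EuclideanSpace ℝ (Fin N) → ℂ :=
  fun x => fderiv ℝ f x (EuclideanSpace.single j 1)

/-- The iterated partial derivative `∂^β = ∂_1^{β 1} ∘ ⋯ ∘ ∂_N^{β N}`
for a multi-index `β`. -/
def mderivE {N : ℕ} (β : Fin N → ℕ) (f : EuclideanSpace ℝ (Fin N) → ℂ) :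
    EuclideanSpace ℝ (Fin N) → ℂ :=
  (List.finRange N).foldr (fun j g => (pderivE j)^[β j] g) f

/-- Weighted bounds on all directional derivatives up to order `m` on `U`. -/
def GoodB {N : ℕ} (U : Set (EuclideanSpace ℝ (Fin N))) (w : EuclideanSpace ℝ (Fin N) → ℝ) :
    ℕ → (EuclideanSpace ℝ (Fin N) → ℂ) → Prop
  | 0, f => ∃ C : ℝ, 0 ≤ C ∧ ∀ x ∈ U, ‖f x‖ ≤ C * w x
  | m + 1, f => (∃ C : ℝ, 0 ≤ C ∧ ∀ x ∈ U, ‖f x‖ ≤ C * w x) ∧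
      (∀ x ∈ U, DifferentiableAt ℝ f x) ∧
      ∀ v, GoodB U w m (fun x => fderiv ℝ f x v)

theorem GoodB.bdd {N : ℕ} {U : Set (EuclideanSpace ℝ (Fin N))}
    {w : EuclideanSpace ℝ (Fin N) → ℝ} {m : ℕ} {f : EuclideanSpace ℝ (Fin N) → ℂ}
    (h : GoodB U w m f) : ∃ C : ℝ, 0 ≤ C ∧ ∀ x ∈ U, ‖f x‖ ≤ C * w x := by
  cases m with
  | zero => exact h
  | succ m => exact h.1

theorem GoodB.pred {N : ℕ} {U : Set (EuclideanSpace ℝ (Fin N))}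
    {w : EuclideanSpace ℝ (Fin N) → ℝ} {m : ℕ} : ∀ {f : EuclideanSpace ℝ (Fin N) → ℂ},
    GoodB U w (m + 1) f → GoodB U w m f := by
  induction m with
  | zero => intro f h; exact h.1
  | succ m ih => intro f h; exact ⟨h.1, h.2.1, fun v => ih (h.2.2 v)⟩

theorem GoodB.mono {N : ℕ} {U : Set (EuclideanSpace ℝ (Fin N))}
    {w : EuclideanSpace ℝ (Fin N) → ℝ} {m n : ℕ} (hmn : m ≤ n)
    {f : EuclideanSpace ℝ (Fin N) → ℂ} (h : GoodB U w n f) : GoodB U w m f := by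
  induction n, hmn using Nat.le_induction with
  | base => exact h
  | succ n _ ih => exact ih h.pred

theorem GoodB.congr {N : ℕ} {U : Set (EuclideanSpace ℝ (Fin N))} (hU : IsOpen U)
    {w : EuclideanSpace ℝ (Fin N) → ℝ} {m : ℕ} : ∀ {f g : EuclideanSpace ℝ (Fin N) → ℂ},
    (∀ x ∈ U, g x = f x) → GoodB U w m f → GoodB U w m g := by
  induction m with
  | zero =>
    rintro f g hfg ⟨C, hC, h⟩
    exact ⟨C, hC, fun x hx => by rw [hfg x hx]; exact h x hx⟩
  | succ m ih =>
    rintro f g hfg ⟨⟨C, hC, h⟩, h2, h3⟩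
    have hev : ∀ x ∈ U, g =ᶠ[nhds x] f := fun x hx => by
      filter_upwards [hU.mem_nhds hx] with y hy using hfg y hy
    refine ⟨⟨C, hC, fun x hx => by rw [hfg x hx]; exact h x hx⟩, fun x hx => ?_, fun v => ?_⟩
    · exact (hev x hx).differentiableAt_iff.2 (h2 x hx)
    · exact ih (fun x hx => by rw [(hev x hx).fderiv_eq]) (h3 v)

theorem GoodB.add {N : ℕ} {U : Set (EuclideanSpace ℝ (Fin N))} (hU : IsOpen U)
    {w : EuclideanSpace ℝ (Fin N) → ℝ} {m : ℕ} : ∀ {f g : EuclideanSpace ℝ (Fin N) → ℂ},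
    GoodB U w m f → GoodB U w m g → GoodB U w m (fun x => f x + g x) := by
  have key : ∀ {f g : EuclideanSpace ℝ (Fin N) → ℂ},
      (∃ C : ℝ, 0 ≤ C ∧ ∀ x ∈ U, ‖f x‖ ≤ C * w x) → (∃ C : ℝ, 0 ≤ C ∧ ∀ x ∈ U, ‖g x‖ ≤ C * w x) →
      ∃ C : ℝ, 0 ≤ C ∧ ∀ x ∈ U, ‖f x + g x‖ ≤ C * w x := by
    rintro f g ⟨C, hC, h⟩ ⟨D, hD, h'⟩
    refine ⟨C + D, by positivity, fun x hx => ?_⟩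
    have := norm_add_le (f x) (g x)
    have := h x hx
    have := h' x hx
    linarith
  induction m with
  | zero => intro f g h h'; exact key h h'
  | succ m ih =>
    intro f g h h'
    refine ⟨key h.1 h'.1, fun x hx => (h.2.1 x hx).add (h'.2.1 x hx), fun v => ?_⟩
    refine GoodB.congr hU (fun x hx => ?_) (ih (h.2.2 v) (h'.2.2 v))
    rw [fderiv_fun_add (h.2.1 x hx) (h'.2.1 x hx)]
    rfl

theorem GoodB.cmul {N : ℕ} {U : Set (EuclideanSpace ℝ (Fin N))} (hU : IsOpen U)
    {w : EuclideanSpace ℝ (Fin N) → ℝ} {m : ℕ} (c : ℂ) : ∀ {f : EuclideanSpace ℝ (Fin N) → ℂ},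
    GoodB U w m f → GoodB U w m (fun x => c * f x) := by
  have key : ∀ {f : EuclideanSpace ℝ (Fin N) → ℂ},
      (∃ C : ℝ, 0 ≤ C ∧ ∀ x ∈ U, ‖f x‖ ≤ C * w x) →
      ∃ C : ℝ, 0 ≤ C ∧ ∀ x ∈ U, ‖c * f x‖ ≤ C * w x := by
    rintro f ⟨C, hC, h⟩
    refine ⟨‖c‖ * C, by positivity, fun x hx => ?_⟩
    rw [norm_mul, mul_assoc]
    exact mul_le_mul_of_nonneg_left (h x hx) (norm_nonneg _)
  induction m with
  | zero => intro f h; exact key h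
  | succ m ih =>
    intro f h
    refine ⟨key h.1, fun x hx => (h.2.1 x hx).const_mul c, fun v => ?_⟩
    refine GoodB.congr hU (fun x hx => ?_) (ih (h.2.2 v))
    rw [fderiv_const_mul (h.2.1 x hx)]
    rfl

theorem GoodB.sum {N : ℕ} {U : Set (EuclideanSpace ℝ (Fin N))} (hU : IsOpen U)
    {w : EuclideanSpace ℝ (Fin N) → ℝ} {m : ℕ} {ι : Type} (s : Finset ι)
    {f : ι → EuclideanSpace ℝ (Fin N) → ℂ}
    (h : ∀ i, GoodB U w m (f i)) (hz : GoodB U w m (fun _ => (0 : ℂ))) :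
    GoodB U w m (fun x => ∑ i ∈ s, f i x) := by
  classical
  induction s using Finset.induction_on with
  | empty => simpa using hz
  | insert a s ha ih =>
    simp only [Finset.sum_insert ha]
    exact GoodB.add hU (h a) ih

theorem GoodB.zero {N : ℕ} {U : Set (EuclideanSpace ℝ (Fin N))}
    {w : EuclideanSpace ℝ (Fin N) → ℝ} {m : ℕ} : GoodB U w m (fun _ => (0 : ℂ)) := by
  induction m with
  | zero => exact ⟨0, le_rfl, fun x _ => by simp⟩
  | succ m ih =>
    refine ⟨⟨0, le_rfl, fun x _ => by simp⟩, fun x _ => differentiableAt_const _, fun v => ?_⟩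
    simpa using ih

theorem GoodB.mul {N : ℕ} {U : Set (EuclideanSpace ℝ (Fin N))} (hU : IsOpen U)
    {w : EuclideanSpace ℝ (Fin N) → ℝ} {m : ℕ} :
    ∀ {f g : EuclideanSpace ℝ (Fin N) → ℂ},
    GoodB U w m f → GoodB U (fun _ => 1) m g → GoodB U w m (fun x => f x * g x) := by
  have key : ∀ {f g : EuclideanSpace ℝ (Fin N) → ℂ},
      (∃ C : ℝ, 0 ≤ C ∧ ∀ x ∈ U, ‖f x‖ ≤ C * w x) → (∃ C : ℝ, 0 ≤ C ∧ ∀ x ∈ U, ‖g x‖ ≤ C * 1) →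
      ∃ C : ℝ, 0 ≤ C ∧ ∀ x ∈ U, ‖f x * g x‖ ≤ C * w x := by
    rintro f g ⟨C, hC, h⟩ ⟨D, hD, h'⟩
    refine ⟨C * D, by positivity, fun x hx => ?_⟩
    rw [norm_mul]
    calc ‖f x‖ * ‖g x‖ ≤ (C * w x) * (D * 1) :=
          mul_le_mul (h x hx) (h' x hx) (norm_nonneg _) ((norm_nonneg _).trans (h x hx))
      _ = C * D * w x := by ring
  induction m with
  | zero => intro f g h h'; exact key h h'
  | succ m ih =>
    intro f g h h'
    refine ⟨key h.1 h'.1, fun x hx => (h.2.1 x hx).mul (h'.2.1 x hx), fun v => ?_⟩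
    refine GoodB.congr hU (fun x hx => ?_)
      (GoodB.add hU (ih h.pred (h'.2.2 v)) (ih (h.2.2 v) h'.pred))
    rw [fderiv_fun_mul (h.2.1 x hx) (h'.2.1 x hx)]
    simp [mul_comm]

theorem GoodB.comp {N : ℕ} {U V : Set (EuclideanSpace ℝ (Fin N))} (hU : IsOpen U)
    {w : EuclideanSpace ℝ (Fin N) → ℝ}
    (L : EuclideanSpace ℝ (Fin N) →L[ℝ] EuclideanSpace ℝ (Fin N))
    (hL : ∀ x ∈ U, L x ∈ V) (hw : ∀ x, w (L x) = w x) {m : ℕ} :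
    ∀ {f : EuclideanSpace ℝ (Fin N) → ℂ},
    GoodB V w m f → GoodB U w m (fun x => f (L x)) := by
  have key : ∀ {f : EuclideanSpace ℝ (Fin N) → ℂ},
      (∃ C : ℝ, 0 ≤ C ∧ ∀ x ∈ V, ‖f x‖ ≤ C * w x) →
      ∃ C : ℝ, 0 ≤ C ∧ ∀ x ∈ U, ‖f (L x)‖ ≤ C * w x := by
    rintro f ⟨C, hC, h⟩
    refine ⟨C, hC, fun x hx => ?_⟩
    rw [← hw]
    exact h _ (hL x hx)
  induction m with
  | zero => intro f h; exact key h
  | succ m ih =>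
    intro f h
    refine ⟨key h.1, fun x hx => (h.2.1 _ (hL x hx)).comp x L.differentiableAt, fun v => ?_⟩
    refine GoodB.congr hU (fun x hx => ?_) (ih (h.2.2 (L v)))
    have := ((h.2.1 _ (hL x hx)).hasFDerivAt.comp x L.hasFDerivAt).fderiv
    change fderiv ℝ (f ∘ L) x v = _
    rw [this]
    rfl

theorem GoodB.inv {N : ℕ} {U : Set (EuclideanSpace ℝ (Fin N))} (hU : IsOpen U)
    (α : EuclideanSpace ℝ (Fin N)) (h1 : ∀ x ∈ U, 1 < |⟪x, α⟫|) {m : ℕ} :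
    GoodB U (fun _ => 1) m (fun x => ((⟪x, α⟫ : ℝ) : ℂ)⁻¹) := by
  have key : ∃ C : ℝ, 0 ≤ C ∧ ∀ x ∈ U, ‖((⟪x, α⟫ : ℝ) : ℂ)⁻¹‖ ≤ C * 1 := by
    refine ⟨1, zero_le_one, fun x hx => ?_⟩
    rw [norm_inv, Complex.norm_real, Real.norm_eq_abs, mul_one]
    exact inv_le_one_of_one_le₀ (h1 x hx).le
  have hd : ∀ x ∈ U, HasFDerivAt (fun x => ((⟪x, α⟫ : ℝ) : ℂ)⁻¹)
      (-(((⟪x, α⟫ : ℝ) : ℂ) ^ 2)⁻¹ • (Complex.ofRealCLM.comp (innerSL ℝ α))) x := by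
    intro x hx
    have hne : ((⟪x, α⟫ : ℝ) : ℂ) ≠ 0 := by
      have := h1 x hx
      rw [Ne, Complex.ofReal_eq_zero]
      intro h0
      rw [h0] at this
      norm_num at this
    have hA : HasFDerivAt (fun x => ((⟪x, α⟫ : ℝ) : ℂ)) (Complex.ofRealCLM.comp (innerSL ℝ α)) x := by
      have := (Complex.ofRealCLM.comp (innerSL ℝ α)).hasFDerivAt (x := x)
      refine this.congr_of_eventuallyEq (Filter.Eventually.of_forall fun y => ?_)
      simp [real_inner_comm]
    exact (hasDerivAt_inv hne).comp_hasFDerivAt x hA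
  induction m with
  | zero => exact key
  | succ m ih =>
    refine ⟨key, fun x hx => (hd x hx).differentiableAt, fun v => ?_⟩
    refine GoodB.congr hU (fun x hx => ?_)
      (GoodB.cmul hU (-((⟪α, v⟫ : ℝ) : ℂ)) (GoodB.mul hU ih ih))
    rw [(hd x hx).fderiv]
    simp
    ring

/-- The linear map `x ↦ x - t ⟨α, x⟩ α`. -/
def Acl {N : ℕ} (α : EuclideanSpace ℝ (Fin N)) (t : ℝ) :
    EuclideanSpace ℝ (Fin N) →L[ℝ] EuclideanSpace ℝ (Fin N) :=
  ContinuousLinearMap.id ℝ _ - t • (innerSL ℝ α).smulRight α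

theorem Acl_apply {N : ℕ} (α : EuclideanSpace ℝ (Fin N)) (t : ℝ) (x) :
    Acl α t x = x - (t * ⟪α, x⟫) • α := by
  simp [Acl, smul_smul]

theorem Acl_cont {N : ℕ} (α : EuclideanSpace ℝ (Fin N)) : Continuous (Acl α) := by
  unfold Acl
  fun_prop

/-- The averaging operator along the segment. -/
def TT {N : ℕ} (α : EuclideanSpace ℝ (Fin N)) (n : ℕ) (g : EuclideanSpace ℝ (Fin N) → ℂ)
    (x : EuclideanSpace ℝ (Fin N)) : ℂ :=
  ∫ t in (0 : ℝ)..1, (t ^ n : ℝ) • g (Acl α t x)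

theorem TT_hasFDerivAt {N : ℕ} (α : EuclideanSpace ℝ (Fin N)) (n : ℕ)
    (g : EuclideanSpace ℝ (Fin N) → ℂ) (hg : ContDiff ℝ 1 g) (x : EuclideanSpace ℝ (Fin N)) :
    HasFDerivAt (TT α n g)
      (∫ t in (0 : ℝ)..1, (t ^ n : ℝ) • (fderiv ℝ g (Acl α t x)).comp (Acl α t)) x := by
  have hA := Acl_cont α
  have hA2 : Continuous (fun q : EuclideanSpace ℝ (Fin N) × ℝ => Acl α q.2 q.1) :=
    (hA.comp continuous_snd).clm_apply continuous_fst
  have hg' : Continuous (fderiv ℝ g) := hg.continuous_fderiv one_ne_zero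
  have hF' : Continuous (fun q : EuclideanSpace ℝ (Fin N) × ℝ =>
      (q.2 ^ n : ℝ) • (fderiv ℝ g (Acl α q.2 q.1)).comp (Acl α q.2)) :=
    (continuous_snd.pow n).smul ((hg'.comp hA2).clm_comp (hA.comp continuous_snd))
  have hF : Continuous (fun q : EuclideanSpace ℝ (Fin N) × ℝ =>
      (q.2 ^ n : ℝ) • g (Acl α q.2 q.1)) :=
    (continuous_snd.pow n).smul (hg.continuous.comp hA2)
  obtain ⟨C, hC⟩ := ((isCompact_closedBall x 1).prod
    (isCompact_Icc (a := (0 : ℝ)) (b := 1))).exists_bound_of_continuousOn hF'.continuousOn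
  refine intervalIntegral.hasFDerivAt_integral_of_dominated_of_fderiv_le
    (bound := fun _ => C) (closedBall_mem_nhds x one_pos)
    (F' := fun x t => (t ^ n : ℝ) • (fderiv ℝ g (Acl α t x)).comp (Acl α t)) ?_ ?_ ?_ ?_ ?_ ?_
  · exact Filter.Eventually.of_forall fun y =>
      (hF.comp (Continuous.prodMk_right y)).aestronglyMeasurable
  · exact (hF.comp (Continuous.prodMk_right x)).intervalIntegrable _ _
  · exact (hF'.comp (Continuous.prodMk_right x)).aestronglyMeasurable
  · refine Filter.Eventually.of_forall fun t ht y hy => hC (y, t) ⟨hy, ?_⟩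
    rw [Set.uIoc_of_le zero_le_one] at ht
    exact ⟨ht.1.le, ht.2⟩
  · exact intervalIntegrable_const
  · refine Filter.Eventually.of_forall fun t _ y _ => ?_
    have h1 : HasFDerivAt g (fderiv ℝ g (Acl α t y)) (Acl α t y) :=
      (hg.differentiable one_ne_zero _).hasFDerivAt
    exact (h1.comp y (Acl α t).hasFDerivAt).const_smul (t ^ n)

theorem TT_fderiv {N : ℕ} (α : EuclideanSpace ℝ (Fin N)) (n : ℕ)
    (g : EuclideanSpace ℝ (Fin N) → ℂ) (hg : ContDiff ℝ 1 g) (x v : EuclideanSpace ℝ (Fin N)) :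
    fderiv ℝ (TT α n g) x v = TT α n (fun y => fderiv ℝ g y v) x +
      (-((⟪α, v⟫ : ℝ) : ℂ)) * TT α (n + 1) (fun y => fderiv ℝ g y α) x := by
  have hA := Acl_cont α
  have hA2 : Continuous (fun t => Acl α t x) := hA.clm_apply continuous_const
  have hg' : Continuous (fderiv ℝ g) := hg.continuous_fderiv one_ne_zero
  have hc : ∀ u, Continuous (fun t => fderiv ℝ g (Acl α t x) u) := fun u =>
    (hg'.comp hA2).clm_apply continuous_const
  rw [(TT_hasFDerivAt α n g hg x).fderiv, ContinuousLinearMap.intervalIntegral_apply]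
  · unfold TT
    rw [← intervalIntegral.integral_const_mul, ← intervalIntegral.integral_add]
    · refine intervalIntegral.integral_congr fun t _ => ?_
      simp [Acl_apply]
      ring
    · exact ((continuous_id.pow n).smul (hc v)).intervalIntegrable _ _
    · exact (continuous_const.mul ((continuous_id.pow (n+1)).smul (hc α))).intervalIntegrable _ _
  · exact ((continuous_id.pow n).smul ((hg'.comp hA2).clm_comp hA)).intervalIntegrable _ _

theorem contDiff_dir {N : ℕ} {g : EuclideanSpace ℝ (Fin N) → ℂ} {m : ℕ}
    (hg : ContDiff ℝ ((m + 1 : ℕ) : WithTop ℕ∞) g) (v : EuclideanSpace ℝ (Fin N)) :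
    ContDiff ℝ (m : WithTop ℕ∞) (fun y => fderiv ℝ g y v) :=
  (hg.fderiv_right (by norm_cast)).clm_apply contDiff_const

theorem GoodB.TT {N : ℕ} {U : Set (EuclideanSpace ℝ (Fin N))} (hU : IsOpen U)
    {w : EuclideanSpace ℝ (Fin N) → ℝ} (α : EuclideanSpace ℝ (Fin N)) {K : ℝ} (hK : 0 ≤ K)
    (hw : ∀ x ∈ U, ∀ t ∈ Set.Icc (0 : ℝ) 1, w (Acl α t x) ≤ K * w x) {m : ℕ} :
    ∀ (n : ℕ) {g : EuclideanSpace ℝ (Fin N) → ℂ}, ContDiff ℝ (m : WithTop ℕ∞) g →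
    GoodB Set.univ w m g → GoodB U w m (TT α n g) := by
  have key : ∀ (n : ℕ) {f : EuclideanSpace ℝ (Fin N) → ℂ},
      (∃ C : ℝ, 0 ≤ C ∧ ∀ x ∈ Set.univ, ‖f x‖ ≤ C * w x) →
      ∃ C : ℝ, 0 ≤ C ∧ ∀ x ∈ U, ‖_root_.TT α n f x‖ ≤ C * w x := by
    rintro n f ⟨C, hC, h⟩
    refine ⟨C * K, by positivity, fun x hx => ?_⟩
    have := intervalIntegral.norm_integral_le_of_norm_le_const (a := (0 : ℝ)) (b := 1)
      (f := fun t => (t ^ n : ℝ) • f (Acl α t x)) (C := C * K * w x) ?_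
    · simpa [_root_.TT] using this
    · intro t ht
      rw [Set.uIoc_of_le zero_le_one] at ht
      rw [norm_smul, Real.norm_eq_abs, abs_of_nonneg (pow_nonneg ht.1.le n)]
      calc t ^ n * ‖f (Acl α t x)‖ ≤ 1 * ‖f (Acl α t x)‖ :=
            mul_le_mul_of_nonneg_right (pow_le_one₀ ht.1.le ht.2) (norm_nonneg _)
        _ ≤ C * w (Acl α t x) := by rw [one_mul]; exact h _ trivial
        _ ≤ C * (K * w x) := mul_le_mul_of_nonneg_left (hw x hx t ⟨ht.1.le, ht.2⟩) hC
        _ = C * K * w x := by ring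
  induction m with
  | zero => intro n g _ h; exact key n h
  | succ m ih =>
    intro n g hg h
    have hg1 : ContDiff ℝ 1 g := hg.of_le (by norm_cast; omega)
    refine ⟨key n h.1, fun x _ => (TT_hasFDerivAt α n g hg1 x).differentiableAt, fun v => ?_⟩
    refine GoodB.congr hU (fun x _ => TT_fderiv α n g hg1 x v) ?_
    exact GoodB.add hU (ih n (contDiff_dir hg v) (h.2.2 v))
      (GoodB.cmul hU _ (ih (n + 1) (contDiff_dir hg α) (h.2.2 α)))

theorem GoodB.pderiv_iter {N : ℕ} {U : Set (EuclideanSpace ℝ (Fin N))}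
    {w : EuclideanSpace ℝ (Fin N) → ℝ} (j : Fin N) (n : ℕ) : ∀ {m : ℕ}
    {f : EuclideanSpace ℝ (Fin N) → ℂ},
    GoodB U w (m + n) f → GoodB U w m ((pderivE j)^[n] f) := by
  induction n with
  | zero => intro m f h; exact h
  | succ n ih =>
    intro m f h
    rw [Function.iterate_succ_apply]
    exact ih (h.2.2 _)

theorem GoodB.foldr {N : ℕ} {U : Set (EuclideanSpace ℝ (Fin N))}
    {w : EuclideanSpace ℝ (Fin N) → ℝ} (β : Fin N → ℕ) {f : EuclideanSpace ℝ (Fin N) → ℂ}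
    (l : List (Fin N)) : ∀ {m : ℕ},
    GoodB U w (m + (l.map β).sum) f →
      GoodB U w m (l.foldr (fun j g => (pderivE j)^[β j] g) f) := by
  induction l with
  | nil => intro m h; exact h
  | cons j l ih =>
    intro m h
    rw [List.foldr_cons]
    refine GoodB.pderiv_iter j _ (ih ?_)
    rw [List.map_cons, List.sum_cons, ← add_assoc] at h
    exact h

theorem list_sum_eq {N : ℕ} (β : Fin N → ℕ) : ((List.finRange N).map β).sum = ∑ j, β j := by
  rw [← List.ofFn_eq_map, List.sum_ofFn]

theorem pderiv_contDiff {N : ℕ} (j : Fin N) {f : EuclideanSpace ℝ (Fin N) → ℂ} {m : ℕ}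
    (hf : ContDiff ℝ ((m + 1 : ℕ) : WithTop ℕ∞) f) :
    ContDiff ℝ (m : WithTop ℕ∞) (pderivE j f) := contDiff_dir hf _

theorem pderiv_iter_contDiff {N : ℕ} (j : Fin N) (n : ℕ) : ∀ {m : ℕ}
    {f : EuclideanSpace ℝ (Fin N) → ℂ},
    ContDiff ℝ ((m + n : ℕ) : WithTop ℕ∞) f →
    ContDiff ℝ (m : WithTop ℕ∞) ((pderivE j)^[n] f) := by
  induction n with
  | zero => intro m f h; exact h
  | succ n ih =>
    intro m f h
    rw [Function.iterate_succ_apply]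
    exact ih (pderiv_contDiff j h)

theorem foldr_contDiff {N : ℕ} (β : Fin N → ℕ) {f : EuclideanSpace ℝ (Fin N) → ℂ}
    (l : List (Fin N)) : ∀ {m : ℕ},
    ContDiff ℝ ((m + (l.map β).sum : ℕ) : WithTop ℕ∞) f →
      ContDiff ℝ (m : WithTop ℕ∞) (l.foldr (fun j g => (pderivE j)^[β j] g) f) := by
  induction l with
  | nil => intro m h; exact h
  | cons j l ih =>
    intro m h
    rw [List.foldr_cons]
    refine pderiv_iter_contDiff j _ (ih ?_)
    rw [List.map_cons, List.sum_cons, ← add_assoc] at h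
    exact h

theorem pderiv_comm {N : ℕ} (i j : Fin N) {f : EuclideanSpace ℝ (Fin N) → ℂ}
    (hf : ContDiff ℝ 2 f) : pderivE i (pderivE j f) = pderivE j (pderivE i f) := by
  funext x
  have hs := (hf.contDiffAt (x := x)).isSymmSndFDerivAt (by simp)
  have hd : DifferentiableAt ℝ (fderiv ℝ f) x :=
    ((hf.fderiv_right (m := 1) (by norm_num)).differentiable one_ne_zero) x
  have : ∀ u v, fderiv ℝ (fun y => fderiv ℝ f y u) x v = fderiv ℝ (fderiv ℝ f) x v u := by
    intro u v
    rw [fderiv_clm_apply hd (differentiableAt_const _)]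
    simp
  unfold pderivE
  rw [this, this]
  exact hs _ _

theorem pderiv_iter_comm {N : ℕ} (i j : Fin N) (n : ℕ) : ∀ {f : EuclideanSpace ℝ (Fin N) → ℂ},
    ContDiff ℝ ((1 + n : ℕ) : WithTop ℕ∞) f →
    pderivE i ((pderivE j)^[n] f) = (pderivE j)^[n] (pderivE i f) := by
  induction n with
  | zero => intro f _; rfl
  | succ n ih =>
    intro f hf
    rw [Function.iterate_succ_apply, Function.iterate_succ_apply, ih (pderiv_contDiff j hf),
      pderiv_comm i j (hf.of_le (by norm_cast; omega))]

theorem foldr_update {N : ℕ} (β : Fin N → ℕ) (i : Fin N) (f : EuclideanSpace ℝ (Fin N) → ℂ)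
    (l : List (Fin N)) (hi : i ∉ l) :
    l.foldr (fun j g => (pderivE j)^[(β + Pi.single i 1 : Fin N → ℕ) j] g) f =
      l.foldr (fun j g => (pderivE j)^[β j] g) f := by
  induction l with
  | nil => rfl
  | cons j l ih =>
    rw [List.mem_cons, not_or] at hi
    rw [List.foldr_cons, List.foldr_cons, ih hi.2, Pi.add_apply,
      Pi.single_eq_of_ne (Ne.symm hi.1), add_zero]

theorem pderiv_foldr {N : ℕ} (β : Fin N → ℕ) (i : Fin N) {f : EuclideanSpace ℝ (Fin N) → ℂ}
    (l : List (Fin N)) (hi : i ∈ l) (hl : l.Nodup)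
    (hf : ContDiff ℝ ((1 + (l.map β).sum : ℕ) : WithTop ℕ∞) f) :
    pderivE i (l.foldr (fun j g => (pderivE j)^[β j] g) f) =
      l.foldr (fun j g => (pderivE j)^[(β + Pi.single i 1 : Fin N → ℕ) j] g) f := by
  induction l with
  | nil => simp at hi
  | cons j l ih =>
    rw [List.nodup_cons] at hl
    rw [List.map_cons, List.sum_cons] at hf
    rw [List.foldr_cons, List.foldr_cons]
    by_cases hij : i = j
    · subst hij
      rw [foldr_update β i f l hl.1, Pi.add_apply, Pi.single_eq_same,
        Function.iterate_succ_apply']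
    · have hil : i ∈ l := by
        rcases List.mem_cons.1 hi with h | h
        · exact absurd h hij
        · exact h
      rw [pderiv_iter_comm i j, ih hil hl.2, Pi.add_apply, Pi.single_eq_of_ne (Ne.symm hij),
        add_zero]
      · exact hf.of_le (by norm_cast; omega)
      · exact foldr_contDiff β l (hf.of_le (by norm_cast; omega))

theorem goodB_of_bound {N : ℕ} {w : EuclideanSpace ℝ (Fin N) → ℝ} {ℓ : ℕ}
    {φ : EuclideanSpace ℝ (Fin N) → ℂ} (hφ : ContDiff ℝ (ℓ : WithTop ℕ∞) φ)
    (hb : ∀ β : Fin N → ℕ, (∑ j, β j) ≤ ℓ → ∀ x, ‖mderivE β φ x‖ ≤ w x) (m : ℕ) :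
    ∀ β : Fin N → ℕ, (∑ j, β j) + m ≤ ℓ → GoodB Set.univ w m (mderivE β φ) := by
  induction m with
  | zero => exact fun β hβ => ⟨1, zero_le_one, fun x _ => by simpa using hb β hβ x⟩
  | succ m ih =>
    intro β hβ
    have hcd : ContDiff ℝ ((1 : ℕ) : WithTop ℕ∞) (mderivE β φ) := by
      refine foldr_contDiff β _ (hφ.of_le ?_)
      rw [list_sum_eq]
      norm_cast
      omega
    refine ⟨⟨1, zero_le_one, fun x _ => by simpa using hb β (by omega) x⟩,
      fun x _ => hcd.differentiable (by norm_num) x, fun v => ?_⟩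
    have hv : ∀ x, fderiv ℝ (mderivE β φ) x v =
        ∑ j, ((v j : ℝ) : ℂ) * mderivE (β + Pi.single j 1 : Fin N → ℕ) φ x := by
      intro x
      have hvs : v = ∑ j, v j • EuclideanSpace.single j (1 : ℝ) := by
        ext i
        simp [Pi.single_apply]
      conv_lhs => rw [hvs]
      rw [map_sum]
      refine Finset.sum_congr rfl fun j _ => ?_
      rw [map_smul, Complex.real_smul]
      congr 1
      have := pderiv_foldr β j (f := φ) (List.finRange N) (List.mem_finRange j)
        (List.nodup_finRange N) (hφ.of_le (by rw [list_sum_eq]; norm_cast; omega))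
      exact congrFun this x
    refine GoodB.congr isOpen_univ (fun x _ => hv x) ?_
    refine GoodB.sum isOpen_univ _ (fun j => GoodB.cmul isOpen_univ _ (ih _ ?_)) GoodB.zero
    simp [Finset.sum_add_distrib]
    omega

theorem quotient_diff_reflect_decay
    (N : ℕ) (hN : 1 ≤ N)
    (R : Finset (EuclideanSpace ℝ (Fin N)))
    (k : EuclideanSpace ℝ (Fin N) → ℝ)
    (hR0 : (0 : EuclideanSpace ℝ (Fin N)) ∉ R)
    (hRnorm : ∀ α ∈ R, ‖α‖ = Real.sqrt 2)
    (hRrefl : ∀ α ∈ R, ∀ β ∈ R, dunklReflect α β ∈ R)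
    (hk0 : ∀ α ∈ R, 0 ≤ k α)
    (hkinv : ∀ α ∈ R, ∀ β ∈ R, k (dunklReflect α β) = k β)
    (M : ℝ) (hM : 0 ≤ M) (ℓ : ℕ) (hℓ : 1 ≤ ℓ)
    (α : EuclideanSpace ℝ (Fin N)) (hα : α ∈ R)
    (φ : EuclideanSpace ℝ (Fin N) → ℂ) (hφ : ContDiff ℝ (ℓ : ℕ∞) φ)
    (hbound : ∀ β : Fin N → ℕ, (∑ j, β j) ≤ ℓ → ∀ x,
      ‖mderivE β φ x‖ ≤ (1 + ‖x‖) ^ (-(homDim N R k) - M)) :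
    ∃ C : ℝ, 0 < C ∧ ∀ β : Fin N → ℕ, (∑ j, β j) ≤ ℓ - 1 →
      ∀ x : EuclideanSpace ℝ (Fin N), ⟪x, α⟫ ≠ 0 →
        ‖mderivE β (fun z => (φ z - φ (dunklReflect α z)) / ((⟪z, α⟫ : ℝ) : ℂ)) x‖ ≤
          C * (1 + ‖x‖) ^ (-(homDim N R k) - M) := by
  classical
  have hnorm : ‖α‖ ^ 2 = 2 := by rw [hRnorm α hα]; norm_num
  have hαα : ⟪α, α⟫ = (2 : ℝ) := by rw [real_inner_self_eq_norm_sq, hnorm]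
  set s : ℝ := homDim N R k + M with hs
  have hs0 : 0 ≤ s := by
    have : 0 ≤ ∑ α ∈ R, k α := Finset.sum_nonneg hk0
    have : (0 : ℝ) ≤ N := Nat.cast_nonneg N
    simp only [hs, homDim]
    linarith
  have hexp : -(homDim N R k) - M = -s := by rw [hs]; ring
  rw [hexp] at hbound ⊢
  set w : EuclideanSpace ℝ (Fin N) → ℝ := fun x => (1 + ‖x‖) ^ (-s) with hw
  have hw0 : ∀ x, 0 ≤ w x := fun x => by simp only [hw]; positivity
  obtain ⟨n, rfl⟩ : ∃ n, ℓ = n + 1 := ⟨ℓ - 1, by omega⟩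
  have hφ' : ContDiff ℝ ((n + 1 : ℕ) : WithTop ℕ∞) φ := by exact_mod_cast hφ
  have hG : GoodB Set.univ w (n + 1) φ := by
    have h := goodB_of_bound hφ' hbound (n + 1) 0 (by simp)
    have h0 : mderivE (0 : Fin N → ℕ) φ = φ := by
      unfold mderivE
      generalize List.finRange N = l
      induction l with
      | nil => rfl
      | cons j l ih => rw [List.foldr_cons, ih]; rfl
    rwa [h0] at h
  have hrefl : ∀ z, dunklReflect α z = Acl α 1 z := by
    intro z
    rw [dunklReflect, Acl_apply, hnorm, real_inner_comm]
    congr 2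
    ring
  set ψ : EuclideanSpace ℝ (Fin N) → ℂ :=
    fun z => (φ z - φ (dunklReflect α z)) / ((⟪z, α⟫ : ℝ) : ℂ) with hψ
  have hci : Continuous (fun z : EuclideanSpace ℝ (Fin N) => |⟪z, α⟫|) := by fun_prop
  set U1 : Set (EuclideanSpace ℝ (Fin N)) := {z | 0 < |⟪z, α⟫|} ∩ {z | |⟪z, α⟫| < 2} with hU1
  set U2 : Set (EuclideanSpace ℝ (Fin N)) := {z | 1 < |⟪z, α⟫|} with hU2
  have hU1o : IsOpen U1 := (isOpen_lt continuous_const hci).inter (isOpen_lt hci continuous_const)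
  have hU2o : IsOpen U2 := isOpen_lt continuous_const hci
  -- far from the hyperplane
  have hG2 : GoodB U2 w n ψ := by
    have hnr : ∀ x, ‖Acl α 1 x‖ = ‖x‖ := by
      intro x
      have : ‖Acl α 1 x‖ ^ 2 = ‖x‖ ^ 2 := by
        rw [Acl_apply, norm_sub_sq_real, norm_smul, mul_pow, hnorm, inner_smul_right,
          Real.norm_eq_abs, sq_abs, real_inner_comm α x]
        ring
      exact (sq_eq_sq₀ (norm_nonneg _) (norm_nonneg _)).1 this
    have hGn : GoodB Set.univ w n φ := hG.pred
    have e1 : GoodB U2 w n φ := GoodB.comp (V := Set.univ) hU2o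
      (ContinuousLinearMap.id ℝ _) (fun _ _ => trivial) (fun _ => rfl) hGn
    have e2 : GoodB U2 w n (fun x => φ (Acl α 1 x)) := GoodB.comp (V := Set.univ) hU2o
      (Acl α 1) (fun _ _ => trivial) (fun x => by simp only [hw, hnr]) hGn
    refine GoodB.congr hU2o (fun x _ => ?_) (GoodB.mul hU2o
      (GoodB.add hU2o e1 (GoodB.cmul hU2o (-1) e2)) (GoodB.inv hU2o α (fun x hx => hx)))
    simp only [hψ, hrefl]
    rw [div_eq_mul_inv]
    ring
  -- near the hyperplane
  have hG1 : GoodB U1 w n ψ := by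
    have hφ1 : ContDiff ℝ 1 φ := hφ'.of_le (by norm_cast)
    have hwA : ∀ x ∈ U1, ∀ t ∈ Set.Icc (0 : ℝ) 1, w (Acl α t x) ≤ (4 : ℝ) ^ s * w x := by
      intro x hx t ht
      have h2 : |⟪x, α⟫| < 2 := hx.2
      have hα32 : ‖α‖ ≤ 3 / 2 := by nlinarith [norm_nonneg α]
      have hle : ‖x‖ ≤ ‖Acl α t x‖ + 3 := by
        have e : x = Acl α t x + (t * ⟪α, x⟫) • α := by rw [Acl_apply]; abel
        have h3 : ‖(t * ⟪α, x⟫) • α‖ ≤ 3 := by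
          rw [norm_smul, Real.norm_eq_abs, abs_mul, abs_of_nonneg ht.1, real_inner_comm]
          have : t * |⟪x, α⟫| ≤ 2 := by nlinarith [abs_nonneg ⟪x, α⟫, ht.1, ht.2]
          calc t * |⟪x, α⟫| * ‖α‖ ≤ 2 * (3 / 2) :=
                mul_le_mul this hα32 (norm_nonneg _) (by norm_num)
            _ = 3 := by norm_num
        have h4 := norm_add_le (Acl α t x) ((t * ⟪α, x⟫) • α)
        rw [← e] at h4
        linarith
      have hx0 := norm_nonneg x
      have hA0 := norm_nonneg (Acl α t x)
      have h5 : (1 + ‖x‖) / 4 ≤ 1 + ‖Acl α t x‖ := by linarith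
      calc w (Acl α t x) ≤ ((1 + ‖x‖) / 4) ^ (-s) :=
            Real.rpow_le_rpow_of_nonpos (by positivity) h5 (by linarith)
        _ = (4 : ℝ) ^ s * w x := by
            rw [Real.div_rpow (by positivity) (by norm_num), Real.rpow_neg (by norm_num : (0:ℝ) ≤ 4),
              div_inv_eq_mul, mul_comm]
    have e1 := GoodB.TT hU1o (w := w) α (by positivity) hwA 0 (contDiff_dir hφ' α) (hG.2.2 α)
    refine GoodB.congr hU1o (fun x hx => ?_) e1
    have hne : ⟪x, α⟫ ≠ 0 := abs_pos.1 hx.1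
    have hneC : ((⟪x, α⟫ : ℝ) : ℂ) ≠ 0 := Complex.ofReal_ne_zero.2 hne
    have hA2 : Continuous (fun t => Acl α t x) := (Acl_cont α).clm_apply continuous_const
    have hder : ∀ t : ℝ, HasDerivAt (fun t => φ (Acl α t x))
        (fderiv ℝ φ (Acl α t x) (-(⟪α, x⟫ • α))) t := by
      intro t
      have ha : HasDerivAt (fun t => Acl α t x) (-(⟪α, x⟫ • α)) t := by
        simp only [Acl_apply]
        have := (((hasDerivAt_id t).mul_const ⟪α, x⟫).smul_const α).const_sub x
        simpa using this
      exact ((hφ1.differentiable one_ne_zero _).hasFDerivAt).comp_hasDerivAt t ha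
    have hcd : Continuous (fun t => fderiv ℝ φ (Acl α t x) (-(⟪α, x⟫ • α))) :=
      ((hφ1.continuous_fderiv one_ne_zero).comp hA2).clm_apply continuous_const
    have hint := intervalIntegral.integral_eq_sub_of_hasDerivAt (a := 0) (b := 1)
      (fun t _ => hder t) (hcd.intervalIntegrable _ _)
    have hz : Acl α 0 x = x := by simp [Acl_apply]
    rw [hz] at hint
    have hTT : TT α 0 (fun y => fderiv ℝ φ y α) x * ((⟪x, α⟫ : ℝ) : ℂ) =
        φ x - φ (Acl α 1 x) := by
      rw [← neg_sub, ← hint, TT, ← intervalIntegral.integral_mul_const,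
        ← intervalIntegral.integral_neg]
      refine intervalIntegral.integral_congr fun t _ => ?_
      simp [real_inner_comm, mul_comm]
    simp only [hψ, hrefl]
    rw [← hTT, mul_div_cancel_right₀ _ hneC]
  -- conclusion
  have hfin : ∀ U, GoodB U w n ψ → ∀ β : Fin N → ℕ, (∑ j, β j) ≤ n →
      ∃ C : ℝ, 0 ≤ C ∧ ∀ x ∈ U, ‖mderivE β ψ x‖ ≤ C * w x := by
    intro U hU β hβ
    refine (GoodB.foldr (m := 0) β (List.finRange N) (hU.mono ?_)).bdd
    rw [list_sum_eq]
    omega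
  have hboth : ∀ β : Fin N → ℕ, ∃ C : ℝ, 0 ≤ C ∧ ((∑ j, β j) ≤ n → ∀ x, ⟪x, α⟫ ≠ 0 →
      ‖mderivE β ψ x‖ ≤ C * w x) := by
    intro β
    by_cases hβ : (∑ j, β j) ≤ n
    · obtain ⟨C1, hC1, h1⟩ := hfin U1 hG1 β hβ
      obtain ⟨C2, hC2, h2⟩ := hfin U2 hG2 β hβ
      refine ⟨C1 + C2, by positivity, fun _ x hx => ?_⟩
      have m1 := mul_nonneg hC1 (hw0 x)
      have m2 := mul_nonneg hC2 (hw0 x)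
      rw [add_mul]
      by_cases hx2 : 1 < |⟪x, α⟫|
      · have := h2 x hx2
        linarith
      · have := h1 x ⟨abs_pos.2 hx, by
          simp only [Set.mem_ofPred_eq]
          linarith [not_lt.1 hx2]⟩
        linarith
    · exact ⟨0, le_rfl, fun h => absurd h hβ⟩
  choose C hC0 hC using hboth
  have hS : 0 ≤ ∑ β ∈ Finset.Iic (fun _ : Fin N => n), C β := Finset.sum_nonneg fun β _ => hC0 β
  refine ⟨1 + ∑ β ∈ Finset.Iic (fun _ : Fin N => n), C β, by positivity, fun β hβ x hx => ?_⟩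
  have hβn : (∑ j, β j) ≤ n := by simpa using hβ
  have hmem : β ∈ Finset.Iic (fun _ : Fin N => n) := by
    rw [Finset.mem_Iic]
    intro j
    exact (Finset.single_le_sum (fun _ _ => Nat.zero_le _) (Finset.mem_univ j)).trans hβn
  have hle := Finset.single_le_sum (f := C) (fun β _ => hC0 β) hmem
  refine (hC β hβn x hx).trans (mul_le_mul_of_nonneg_right ?_ (hw0 x))
  linarith
end
end

section
/- Let s > 0 and M > 0. Then J^{s}(x) > 0 for all x, and there is a constant C > 0 (depending on s and M) such that: J^{s}(x) ≤ C ‖x‖^{s−𝐍} whenever ‖x‖ ≤ 1/2 and 0 < s < 𝐍; J^{s}(x) ≤ C(−ln ‖x‖) whenever ‖x‖ ≤ 1/2 and s = 𝐍; J^{s}(x) ≤ C whenever ‖x‖ ≤ 1/2 and s > 𝐍; and J^{s}(x) ≤ C (1 + ‖x‖²)^{−M} whenever ‖x‖ > 1/2. -/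
open MeasureTheory Metric
open scoped ENNReal RealInnerProductSpace BigOperators

noncomputable section

/-- The normalizing constant `c_k = ∫ e^{-‖x‖²/2} dw(x)`. -/
def dunklConst (N : ℕ) (R : Finset (EuclideanSpace ℝ (Fin N)))
    (k : EuclideanSpace ℝ (Fin N) → ℝ) : ℝ :=
  ∫ x, Real.exp (-‖x‖ ^ 2 / 2) ∂(dunklMeasure N R k)

/-- The Dunkl heat kernel `h_t(x) = c_k⁻¹ (2t)^{-𝐍/2} e^{-‖x‖²/(4t)}`. -/
def dunklHeat (N : ℕ) (R : Finset (EuclideanSpace ℝ (Fin N)))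
    (k : EuclideanSpace ℝ (Fin N) → ℝ) (t : ℝ) (x : EuclideanSpace ℝ (Fin N)) : ℝ :=
  (dunklConst N R k)⁻¹ * (2 * t) ^ (-(homDim N R k) / 2) * Real.exp (-‖x‖ ^ 2 / (4 * t))

/-- The Bessel potential kernel `J^{s}(x) = Γ(s/2)⁻¹ ∫₀^∞ e^{-t} h_t(x) t^{s/2} dt/t`. -/
def dunklBessel (N : ℕ) (R : Finset (EuclideanSpace ℝ (Fin N)))
    (k : EuclideanSpace ℝ (Fin N) → ℝ) (s : ℝ) (x : EuclideanSpace ℝ (Fin N)) : ℝ :=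
  (Real.Gamma (s / 2))⁻¹ *
    ∫ t in Set.Ioi (0 : ℝ), Real.exp (-t) * dunklHeat N R k t x * t ^ (s / 2) / t


lemma dunklConst_pos_aux (N : ℕ) (R : Finset (EuclideanSpace ℝ (Fin N)))
    (k : EuclideanSpace ℝ (Fin N) → ℝ)
    (hR0 : (0 : EuclideanSpace ℝ (Fin N)) ∉ R)
    (hk0 : ∀ α ∈ R, 0 ≤ k α) : 0 < dunklConst N R k := by
  have hcont : Continuous fun x : EuclideanSpace ℝ (Fin N) => ∏ α ∈ R, |⟪x, α⟫| ^ (k α) := by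
    refine continuous_finsetProd _ fun α hα => ?_
    exact Continuous.rpow_const (by fun_prop) fun x => Or.inr (hk0 α hα)
  have hnn : ∀ x : EuclideanSpace ℝ (Fin N), 0 ≤ ∏ α ∈ R, |⟪x, α⟫| ^ (k α) := fun x =>
    Finset.prod_nonneg fun α _ => Real.rpow_nonneg (abs_nonneg _) _
  unfold dunklConst dunklMeasure
  rw [integral_withDensity_eq_integral_toReal_smul hcont.measurable.ennreal_ofReal
    (Filter.Eventually.of_forall fun x => ENNReal.ofReal_lt_top)]
  simp only [ENNReal.toReal_ofReal (hnn _), smul_eq_mul]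
  set A : ℝ := ∑ α ∈ R, k α * ‖α‖ with hA
  have hgauss : Integrable (fun x : EuclideanSpace ℝ (Fin N) => Real.exp (-(1/4) * ‖x‖ ^ 2)) := by
    apply Integrable.of_integral_ne_zero
    rw [GaussianFourier.integral_rexp_neg_mul_sq_norm (by norm_num)]
    positivity
  have hint : Integrable (fun x : EuclideanSpace ℝ (Fin N) =>
      (∏ α ∈ R, |⟪x, α⟫| ^ (k α)) * Real.exp (-‖x‖ ^ 2 / 2)) := by
    refine Integrable.mono' (hgauss.const_mul (Real.exp (A ^ 2))) ?_ ?_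
    · exact (hcont.mul (by fun_prop)).aestronglyMeasurable
    · refine Filter.Eventually.of_forall fun x => ?_
      rw [Real.norm_of_nonneg (mul_nonneg (hnn x) (Real.exp_pos _).le)]
      have h1 : ∏ α ∈ R, |⟪x, α⟫| ^ (k α) ≤ Real.exp (A * ‖x‖) := by
        rw [hA, Finset.sum_mul, Real.exp_sum]
        refine Finset.prod_le_prod (fun α _ => Real.rpow_nonneg (abs_nonneg _) _) fun α hα => ?_
        have h2 : |⟪x, α⟫| ≤ Real.exp (‖x‖ * ‖α‖) :=
          (abs_real_inner_le_norm x α).trans (by linarith [Real.add_one_le_exp (‖x‖ * ‖α‖)])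
        refine (Real.rpow_le_rpow (abs_nonneg _) h2 (hk0 α hα)).trans ?_
        rw [← Real.exp_mul]
        apply le_of_eq
        congr 1
        ring
      refine (mul_le_mul_of_nonneg_right h1 (Real.exp_pos _).le).trans ?_
      rw [← Real.exp_add, ← Real.exp_add]
      apply Real.exp_le_exp.mpr
      nlinarith [sq_nonneg (A - ‖x‖ / 2)]
  rw [integral_pos_iff_support_of_nonneg_ae
    (Filter.Eventually.of_forall fun x => mul_nonneg (hnn x) (Real.exp_pos _).le) hint]
  have hae : ∀ᵐ x : EuclideanSpace ℝ (Fin N), ∀ α ∈ R, ⟪x, α⟫ ≠ 0 := by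
    rw [Filter.eventually_all_finset]
    intro α hα
    have h0 : (volume : Measure (EuclideanSpace ℝ (Fin N))) ((ℝ ∙ α)ᗮ : Submodule ℝ _) = 0 := by
      apply Measure.addHaar_submodule
      intro h
      have h3 : α ∈ (ℝ ∙ α)ᗮ := h ▸ Submodule.mem_top
      rw [Submodule.mem_orthogonal_singleton_iff_inner_left] at h3
      exact hR0 ((inner_self_eq_zero.mp h3) ▸ hα)
    rw [ae_iff]
    refine measure_mono_null ?_ h0
    intro x hx
    simp only [ne_eq, not_not, Set.mem_ofPred_eq] at hx
    exact Submodule.mem_orthogonal_singleton_iff_inner_left.mpr hx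
  have hsupp : ∀ᵐ x : EuclideanSpace ℝ (Fin N), x ∈ Function.support
      (fun x : EuclideanSpace ℝ (Fin N) =>
      (∏ α ∈ R, |⟪x, α⟫| ^ (k α)) * Real.exp (-‖x‖ ^ 2 / 2)) := by
    filter_upwards [hae] with x hx
    rw [Function.mem_support]
    apply ne_of_gt
    exact mul_pos (Finset.prod_pos fun α hα =>
      Real.rpow_pos_of_pos (abs_pos.mpr (hx α hα)) _) (Real.exp_pos _)
  have hm := measure_of_measure_compl_eq_zero (mem_ae_iff.mp hsupp)
  have hu : 0 < (volume : Measure (EuclideanSpace ℝ (Fin N))) Set.univ :=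
    Measure.measure_univ_pos.mpr (NeZero.ne _)
  rw [← hm] at hu
  exact hu

/-- The reduced integrand. -/
def bInt (a b t : ℝ) : ℝ := Real.exp (-t) * t ^ (a - 1) * Real.exp (-b / t)

lemma bInt_pos (a b : ℝ) {t : ℝ} (ht : 0 < t) : 0 < bInt a b t := by
  unfold bInt; positivity

lemma bInt_meas (a b : ℝ) : Measurable (bInt a b) := by
  unfold bInt; fun_prop

lemma exp_bound {b t p : ℝ} (hb : 0 < b) (ht : 0 < t) (hp : 0 < p) :
    Real.exp (-b / t) ≤ p ^ p * b ^ (-p) * t ^ p := by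
  have h1 : b / (t * p) ≤ Real.exp (b / (t * p)) := by
    linarith [Real.add_one_le_exp (b / (t * p))]
  have h2 := Real.rpow_le_rpow (by positivity) h1 hp.le
  rw [← Real.exp_mul, show b / (t * p) * p = b / t by field_simp,
    Real.div_rpow hb.le (by positivity), Real.mul_rpow ht.le hp.le] at h2
  rw [neg_div, Real.exp_neg, Real.rpow_neg hb.le]
  have h3 : 0 < b ^ p / (t ^ p * p ^ p) := by positivity
  refine (inv_anti₀ h3 h2).trans (le_of_eq ?_)
  have := Real.rpow_pos_of_pos hb p
  have := Real.rpow_pos_of_pos ht p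
  have := Real.rpow_pos_of_pos hp p
  field_simp

lemma bInt_le_gamma {a b p t : ℝ} (hb : 0 < b) (hp : 0 < p) (ht : 0 < t) :
    bInt a b t ≤ p ^ p * b ^ (-p) * (Real.exp (-t) * t ^ (a + p - 1)) := by
  unfold bInt
  refine (mul_le_mul_of_nonneg_left (exp_bound hb ht hp) (by positivity)).trans (le_of_eq ?_)
  rw [show a + p - 1 = (a - 1) + p by ring, Real.rpow_add ht]
  ring

lemma bInt_integrable_of_le {a b : ℝ} {S : Set ℝ} (hS : MeasurableSet S)
    (hS0 : ∀ t ∈ S, 0 < t) {g : ℝ → ℝ} (hg : IntegrableOn g S)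
    (h : ∀ t ∈ S, bInt a b t ≤ g t) : IntegrableOn (bInt a b) S := by
  refine Integrable.mono' hg (bInt_meas a b).aestronglyMeasurable ?_
  filter_upwards [ae_restrict_mem hS] with t ht
  rw [Real.norm_of_nonneg (bInt_pos a b (hS0 t ht)).le]
  exact h t ht

lemma bInt_integrable {a b : ℝ} (hb : 0 < b) : IntegrableOn (bInt a b) (Set.Ioi 0) := by
  have hp : 0 < |a| + 1 := by positivity
  have h1 : 0 < a + (|a| + 1) := by linarith [neg_abs_le a]
  exact bInt_integrable_of_le measurableSet_Ioi (fun t ht => ht)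
    ((Real.GammaIntegral_convergent h1).const_mul _) fun t ht => bInt_le_gamma hb hp ht

lemma bInt_integral_le_gamma {a b p : ℝ} (hb : 0 < b) (hp : 0 < p) (hap : 0 < a + p) :
    ∫ t in Set.Ioi 0, bInt a b t ≤ p ^ p * b ^ (-p) * Real.Gamma (a + p) := by
  rw [Real.Gamma_eq_integral hap, ← integral_const_mul]
  exact setIntegral_mono_on (bInt_integrable hb)
    ((Real.GammaIntegral_convergent hap).const_mul _) measurableSet_Ioi
    fun t ht => bInt_le_gamma hb hp ht

lemma bInt_le_gamma' {a b t : ℝ} (hb : 0 ≤ b) (ht : 0 < t) :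
    bInt a b t ≤ Real.exp (-t) * t ^ (a - 1) := by
  unfold bInt
  apply mul_le_of_le_one_right (by positivity)
  rw [Real.exp_le_one_iff, neg_div]
  have : 0 ≤ b / t := by positivity
  linarith

lemma bInt_integrable' {a b : ℝ} (hb : 0 ≤ b) (ha : 0 < a) :
    IntegrableOn (bInt a b) (Set.Ioi 0) :=
  bInt_integrable_of_le measurableSet_Ioi (fun t ht => ht)
    (Real.GammaIntegral_convergent ha) fun t ht => bInt_le_gamma' hb ht

lemma bInt_integral_le_gamma' {a b : ℝ} (hb : 0 ≤ b) (ha : 0 < a) :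
    ∫ t in Set.Ioi 0, bInt a b t ≤ Real.Gamma a := by
  rw [Real.Gamma_eq_integral ha]
  exact setIntegral_mono_on (bInt_integrable' hb ha)
    (Real.GammaIntegral_convergent ha) measurableSet_Ioi
    fun t ht => bInt_le_gamma' hb ht

lemma bInt_integral_pos {a b : ℝ} (h : IntegrableOn (bInt a b) (Set.Ioi 0)) :
    0 < ∫ t in Set.Ioi 0, bInt a b t := by
  rw [setIntegral_pos_iff_support_of_nonneg_ae _ h]
  · refine lt_of_lt_of_le ?_ (measure_mono (s := Set.Ioi 0) fun t ht => ⟨(bInt_pos a b ht).ne', ht⟩)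
    simp
  · filter_upwards [ae_restrict_mem measurableSet_Ioi] with t ht
    exact (bInt_pos a b ht).le

lemma bInt_not_integrable {a : ℝ} (ha : a ≤ 0) : ∫ t in Set.Ioi 0, bInt a 0 t = 0 := by
  apply integral_undef
  intro h
  have h1 : IntegrableOn (bInt a 0) (Set.Ioo 0 1) :=
    IntegrableOn.mono_set h fun t ht => ht.1
  have h2 : IntegrableOn (fun t : ℝ => t ^ (a - 1)) (Set.Ioo 0 1) := by
    refine Integrable.mono' (h1.const_mul (Real.exp 1)) ?_ ?_
    · exact Measurable.aestronglyMeasurable (by fun_prop)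
    · filter_upwards [ae_restrict_mem measurableSet_Ioo] with t ht
      have h3 : 0 < t ^ (a - 1) := Real.rpow_pos_of_pos ht.1 _
      rw [Real.norm_of_nonneg h3.le]
      unfold bInt
      have h4 : 1 ≤ Real.exp 1 * Real.exp (-t) := by
        rw [← Real.exp_add]
        exact Real.one_le_exp (by linarith [ht.2])
      simp only [neg_zero, zero_div, Real.exp_zero, mul_one]
      nlinarith
  rw [intervalIntegral.integrableOn_Ioo_rpow_iff one_pos] at h2
  linarith

/-- Bound near zero. -/
lemma bInt_near {a b : ℝ} (hb : 0 < b) (ha : a ≤ 0) :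
    ∫ t in Set.Ioc 0 b, bInt a b t ≤ (1 - a) ^ (1 - a) * b ^ a := by
  have hp : 0 < 1 - a := by linarith
  have h : ∀ t ∈ Set.Ioc 0 b, bInt a b t ≤ (1 - a) ^ (1 - a) * b ^ (a - 1) := by
    intro t ht
    have h1 := bInt_le_gamma (a := a) hb hp ht.1
    rw [show a + (1 - a) - 1 = 0 by ring, Real.rpow_zero, mul_one,
      show -(1 - a) = a - 1 by ring] at h1
    refine h1.trans (mul_le_of_le_one_right (by positivity) ?_)
    exact Real.exp_le_one_iff.mpr (by linarith [ht.1])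
  have h2 := setIntegral_mono_on (μ := volume)
    ((bInt_integrable (a := a) hb).mono_set (fun t ht => ht.1 : Set.Ioc 0 b ⊆ Set.Ioi 0))
    (integrableOn_const (by simp)) measurableSet_Ioc h
  refine h2.trans (le_of_eq ?_)
  rw [setIntegral_const, Real.volume_real_Ioc_of_le hb.le, smul_eq_mul, Real.rpow_sub_one hb.ne']
  field_simp
  ring

lemma bInt_split {a b : ℝ} (hb : 0 < b) : ∫ t in Set.Ioi 0, bInt a b t =
    (∫ t in Set.Ioc 0 b, bInt a b t) + ∫ t in Set.Ioi b, bInt a b t := by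
  rw [← Set.Ioc_union_Ioi_eq_Ioi hb.le]
  exact setIntegral_union (Set.Ioc_disjoint_Ioi le_rfl) measurableSet_Ioi
    ((bInt_integrable hb).mono_set (fun t ht => ht.1))
    ((bInt_integrable hb).mono_set (Set.Ioi_subset_Ioi hb.le))

lemma bInt_integral_neg {a b : ℝ} (hb : 0 < b) (ha : a < 0) :
    ∫ t in Set.Ioi 0, bInt a b t ≤ ((1 - a) ^ (1 - a) + 1 / (-a)) * b ^ a := by
  rw [bInt_split hb]
  have h1 := bInt_near hb ha.le
  have h2 : ∫ t in Set.Ioi b, bInt a b t ≤ ∫ t in Set.Ioi b, t ^ (a - 1) := by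
    refine setIntegral_mono_on ((bInt_integrable hb).mono_set (Set.Ioi_subset_Ioi hb.le))
      (integrableOn_Ioi_rpow_of_lt (by linarith) hb) measurableSet_Ioi fun t ht => ?_
    have ht0 : 0 < t := hb.trans ht
    refine (bInt_le_gamma' hb.le ht0).trans (mul_le_of_le_one_left (by positivity) ?_)
    exact Real.exp_le_one_iff.mpr (by linarith)
  rw [integral_Ioi_rpow_of_lt (by linarith) hb, sub_add_cancel] at h2
  have h3 : -b ^ a / a = 1 / (-a) * b ^ a := by
    field_simp
  rw [h3] at h2
  linarith

lemma bInt_integral_zero {b : ℝ} (hb : 0 < b) (hb1 : b ≤ 1) :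
    ∫ t in Set.Ioi 0, bInt 0 b t ≤ 2 - Real.log b := by
  rw [bInt_split hb]
  have h1 := bInt_near hb (le_refl (0:ℝ))
  simp only [sub_zero, Real.one_rpow, Real.rpow_zero, mul_one] at h1
  have hI := bInt_integrable (a := 0) hb
  have hs : ∫ t in Set.Ioi b, bInt 0 b t =
      (∫ t in Set.Ioc b 1, bInt 0 b t) + ∫ t in Set.Ioi 1, bInt 0 b t := by
    rw [← Set.Ioc_union_Ioi_eq_Ioi hb1]
    exact setIntegral_union (Set.Ioc_disjoint_Ioi le_rfl) measurableSet_Ioi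
      (hI.mono_set (fun t ht => hb.trans ht.1))
      (hI.mono_set (Set.Ioi_subset_Ioi zero_le_one))
  have h2 : ∫ t in Set.Ioc b 1, bInt 0 b t ≤ ∫ t in Set.Ioc b 1, t⁻¹ := by
    refine setIntegral_mono_on (hI.mono_set (fun t ht => hb.trans ht.1))
      ?_ measurableSet_Ioc fun t ht => ?_
    · rw [← intervalIntegrable_iff_integrableOn_Ioc_of_le hb1]
      apply intervalIntegral.intervalIntegrable_inv
      · intro t ht
        rw [Set.uIcc_of_le hb1] at ht
        exact (hb.trans_le ht.1).ne'
      · exact continuousOn_id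
    · have ht0 : 0 < t := hb.trans ht.1
      refine (bInt_le_gamma' hb.le ht0).trans ?_
      rw [zero_sub, Real.rpow_neg_one]
      exact mul_le_of_le_one_left (by positivity) (Real.exp_le_one_iff.mpr (by linarith))
  rw [← intervalIntegral.integral_of_le (f := fun t : ℝ => t⁻¹) hb1, integral_inv_of_pos hb one_pos, one_div,
    Real.log_inv] at h2
  have h3 : ∫ t in Set.Ioi 1, bInt 0 b t ≤ ∫ t in Set.Ioi 1, Real.exp (-t) := by
    refine setIntegral_mono_on (hI.mono_set (Set.Ioi_subset_Ioi zero_le_one))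
      (integrableOn_exp_neg_Ioi 1) measurableSet_Ioi fun t ht => ?_
    have ht1 : 1 < t := ht
    have ht0 : 0 < t := by linarith
    refine (bInt_le_gamma' hb.le ht0).trans ?_
    rw [zero_sub, Real.rpow_neg_one]
    exact mul_le_of_le_one_right (Real.exp_pos _).le (inv_le_one_of_one_le₀ ht1.le)
  rw [integral_exp_neg_Ioi] at h3
  have h4 : Real.exp (-1) ≤ 1 := Real.exp_le_one_iff.mpr (by norm_num)
  linarith

lemma dunklBessel_eq (N : ℕ) (R : Finset (EuclideanSpace ℝ (Fin N)))
    (k : EuclideanSpace ℝ (Fin N) → ℝ) (s : ℝ) (x : EuclideanSpace ℝ (Fin N)) :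
    dunklBessel N R k s x =
      ((Real.Gamma (s / 2))⁻¹ * ((dunklConst N R k)⁻¹ * 2 ^ (-(homDim N R k) / 2))) *
      ∫ t in Set.Ioi (0 : ℝ), bInt ((s - homDim N R k) / 2) (‖x‖ ^ 2 / 4) t := by
  unfold dunklBessel
  rw [mul_assoc]
  congr 1
  rw [← integral_const_mul]
  refine setIntegral_congr_fun (measurableSet_Ioi (a := (0 : ℝ))) fun t ht => ?_
  have ht0 : 0 < t := ht
  simp only [dunklHeat, bInt]
  rw [Real.mul_rpow (by norm_num) ht0.le,
    show (s - homDim N R k) / 2 - 1 = -(homDim N R k) / 2 + s / 2 - 1 by ring,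
    Real.rpow_sub_one ht0.ne', Real.rpow_add ht0,
    show -(‖x‖ ^ 2 / 4) / t = -‖x‖ ^ 2 / (4 * t) by field_simp]
  ring

theorem dunklBessel_estimates
    (N : ℕ) (hN : 1 ≤ N)
    (R : Finset (EuclideanSpace ℝ (Fin N)))
    (k : EuclideanSpace ℝ (Fin N) → ℝ)
    (hR0 : (0 : EuclideanSpace ℝ (Fin N)) ∉ R)
    (hRnorm : ∀ α ∈ R, ‖α‖ = Real.sqrt 2)
    (hRrefl : ∀ α ∈ R, ∀ β ∈ R, dunklReflect α β ∈ R)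
    (hk0 : ∀ α ∈ R, 0 ≤ k α)
    (hkinv : ∀ α ∈ R, ∀ β ∈ R, k (dunklReflect α β) = k β)
    (s M : ℝ) (hs : 0 < s) (hM : 0 < M) :
    (∀ x : EuclideanSpace ℝ (Fin N), x ≠ 0 → 0 < dunklBessel N R k s x) ∧
    (homDim N R k < s → ∀ x : EuclideanSpace ℝ (Fin N), 0 < dunklBessel N R k s x) ∧
    ∃ C : ℝ, 0 < C ∧ ∀ x : EuclideanSpace ℝ (Fin N),
      (‖x‖ ≤ 1 / 2 → s < homDim N R k →
        dunklBessel N R k s x ≤ C * ‖x‖ ^ (s - homDim N R k)) ∧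
      (‖x‖ ≤ 1 / 2 → s = homDim N R k →
        dunklBessel N R k s x ≤ C * (-Real.log ‖x‖)) ∧
      (‖x‖ ≤ 1 / 2 → homDim N R k < s →
        dunklBessel N R k s x ≤ C) ∧
      (1 / 2 < ‖x‖ →
        dunklBessel N R k s x ≤ C * (1 + ‖x‖ ^ 2) ^ (-M)) := by
  have hc := dunklConst_pos_aux N R k hR0 hk0
  have hG : 0 < Real.Gamma (s / 2) := Real.Gamma_pos_of_pos (by positivity)
  simp only [dunklBessel_eq]
  set D := homDim N R k with hD
  set K := (Real.Gamma (s / 2))⁻¹ * ((dunklConst N R k)⁻¹ * 2 ^ (-D / 2)) with hK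
  have hKpos : 0 < K := by positivity
  clear_value K D
  refine ⟨fun x hx => ?_, fun h x => ?_, ?_⟩
  · have : 0 < ‖x‖ := norm_pos_iff.mpr hx
    exact mul_pos hKpos (bInt_integral_pos (bInt_integrable (by positivity)))
  · exact mul_pos hKpos (bInt_integral_pos (bInt_integrable' (by positivity) (by linarith)))
  set a := (s - D) / 2 with ha
  have hpow : ∀ r : ℝ, 0 < r → (r ^ 2 / 4) ^ a = 4 ^ (-a) * r ^ (s - D) := by
    intro r hr
    rw [Real.div_rpow (by positivity) (by norm_num), ← Real.rpow_natCast r 2,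
      ← Real.rpow_mul hr.le, Real.rpow_neg (by norm_num)]
    rw [show ((2 : ℕ) : ℝ) * a = s - D by rw [ha]; push_cast; ring]
    field_simp
  have e1 : ∃ C : ℝ, 0 < C ∧ ∀ x : EuclideanSpace ℝ (Fin N), s < D →
      K * ∫ t in Set.Ioi 0, bInt a (‖x‖ ^ 2 / 4) t ≤ C * ‖x‖ ^ (s - D) := by
    by_cases hsD : s < D
    · have ha0 : a < 0 := by rw [ha]; linarith
      have h1a : 0 < 1 - a := by linarith
      have hna : 0 < -a := by linarith
      refine ⟨K * (((1 - a) ^ (1 - a) + 1 / (-a)) * 4 ^ (-a)), by positivity, fun x _ => ?_⟩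
      rcases eq_or_ne x 0 with rfl | hx
      · rw [norm_zero, Real.zero_rpow (by linarith)]
        simp [bInt_not_integrable ha0.le]
      · have hx0 : 0 < ‖x‖ := norm_pos_iff.mpr hx
        have h := bInt_integral_neg (b := ‖x‖ ^ 2 / 4) (by positivity) ha0
        rw [hpow _ hx0] at h
        rw [mul_assoc, mul_assoc]
        exact mul_le_mul_of_nonneg_left h hKpos.le
    · exact ⟨1, one_pos, fun x h => absurd h hsD⟩
  have e2 : ∃ C : ℝ, 0 < C ∧ ∀ x : EuclideanSpace ℝ (Fin N), ‖x‖ ≤ 1 / 2 → s = D →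
      K * ∫ t in Set.Ioi 0, bInt a (‖x‖ ^ 2 / 4) t ≤ C * (-Real.log ‖x‖) := by
    refine ⟨K * 8, by positivity, fun x hx hsD => ?_⟩
    have ha0 : a = 0 := by rw [ha, hsD]; simp
    rcases eq_or_ne x 0 with rfl | hx1
    · simp [bInt_not_integrable ha0.le]
    · have hx0 : 0 < ‖x‖ := norm_pos_iff.mpr hx1
      rw [ha0, mul_assoc]
      refine mul_le_mul_of_nonneg_left ?_ hKpos.le
      refine (bInt_integral_zero (by positivity) (by nlinarith)).trans ?_
      rw [Real.log_div (by positivity) (by norm_num), Real.log_pow,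
        show (4 : ℝ) = 2 ^ 2 by norm_num, Real.log_pow]
      have h1 : Real.log ‖x‖ ≤ Real.log (1 / 2) := Real.log_le_log hx0 hx
      rw [one_div, Real.log_inv] at h1
      have h2 := Real.log_two_gt_d9
      push_cast
      linarith
  have e3 : ∃ C : ℝ, 0 < C ∧ ∀ x : EuclideanSpace ℝ (Fin N), D < s →
      K * ∫ t in Set.Ioi 0, bInt a (‖x‖ ^ 2 / 4) t ≤ C := by
    by_cases hsD : D < s
    · have ha0 : 0 < a := by rw [ha]; linarith
      exact ⟨K * Real.Gamma a, mul_pos hKpos (Real.Gamma_pos_of_pos ha0), fun x _ =>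
        mul_le_mul_of_nonneg_left (bInt_integral_le_gamma' (by positivity) ha0) hKpos.le⟩
    · exact ⟨1, one_pos, fun x h => absurd h hsD⟩
  have e4 : ∃ C : ℝ, 0 < C ∧ ∀ x : EuclideanSpace ℝ (Fin N), 1 / 2 < ‖x‖ →
      K * ∫ t in Set.Ioi 0, bInt a (‖x‖ ^ 2 / 4) t ≤ C * (1 + ‖x‖ ^ 2) ^ (-M) := by
    have hp : 0 < M + |a| + 1 := by positivity
    have hMp : M ≤ M + |a| + 1 := by linarith [abs_nonneg a]
    have hap : 0 < a + (M + |a| + 1) := by linarith [neg_abs_le a]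
    generalize M + |a| + 1 = p at *
    have hGp := Real.Gamma_pos_of_pos hap
    refine ⟨K * (p ^ p * 20 ^ p * Real.Gamma (a + p)), by positivity, fun x hx => ?_⟩
    have hx0 : 0 < ‖x‖ := by linarith
    have h := bInt_integral_le_gamma (a := a) (b := ‖x‖ ^ 2 / 4) (by positivity) hp hap
    have h1 : (‖x‖ ^ 2 / 4) ^ (-p) ≤ 20 ^ p * (1 + ‖x‖ ^ 2) ^ (-M) := by
      have h2 : (‖x‖ ^ 2 / 4) ^ (-p) ≤ ((1 + ‖x‖ ^ 2) / 20) ^ (-p) :=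
        Real.rpow_le_rpow_of_nonpos (by positivity) (by nlinarith) (by linarith)
      have h3 : (1 + ‖x‖ ^ 2) ^ (-p) ≤ (1 + ‖x‖ ^ 2) ^ (-M) :=
        Real.rpow_le_rpow_of_exponent_le (by nlinarith) (by linarith)
      rw [Real.div_rpow (x := 1 + ‖x‖ ^ 2) (by positivity) (by norm_num),
        Real.rpow_neg (by norm_num : (0:ℝ) ≤ 20),
        div_inv_eq_mul, mul_comm] at h2
      exact h2.trans (mul_le_mul_of_nonneg_left h3 (by positivity))
    rw [mul_assoc]
    refine mul_le_mul_of_nonneg_left (h.trans ?_) hKpos.le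
    calc p ^ p * (‖x‖ ^ 2 / 4) ^ (-p) * Real.Gamma (a + p)
        ≤ p ^ p * (20 ^ p * (1 + ‖x‖ ^ 2) ^ (-M)) * Real.Gamma (a + p) := by gcongr
      _ = _ := by ring
  obtain ⟨C1, p1, h1⟩ := e1
  obtain ⟨C2, p2, h2⟩ := e2
  obtain ⟨C3, p3, h3⟩ := e3
  obtain ⟨C4, p4, h4⟩ := e4
  refine ⟨C1 + C2 + C3 + C4, by positivity, fun x => ⟨fun _ h => ?_, fun hx h => ?_,
    fun _ h => ?_, fun h => ?_⟩⟩
  · exact (h1 x h).trans (mul_le_mul_of_nonneg_right (by linarith) (by positivity))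
  · refine (h2 x hx h).trans (mul_le_mul_of_nonneg_right (by linarith) ?_)
    have := Real.log_nonpos (norm_nonneg x) (by linarith)
    linarith
  · linarith [h3 x h]
  · exact (h4 x h).trans (mul_le_mul_of_nonneg_right (by linarith) (by positivity))
end
end
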